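/- Let G be a group, k a natural number, and G₀ ≤ G a subgroup such that: (i) every finite subset of the k-th derived subgroup G^{(k)} is contained in some G-conjugate of G₀; and (ii) G contains an element g such that for all integers p ≠ q, every element of g^p G₀ g^{−p} commutes with every element of g^q G₀ g^{−q}. Then Hb^n(G, E) = 0 holds for all n ≥ 1 and all separable dual Banach G-modules E. -/

import Mathlib

open scoped BigOperators

/-- A cochain (function into a normed space) is bounded if its norms are uniformly bounded. -/
def IsBddCochain {G : Type*} {E : Type*} [NormedAddCommGroup E] {n : ℕ}
    (f : (Fin n → G) → E) : Prop :=
  ∃ C : ℝ, ∀ g, ‖f g‖ ≤ C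

/-- The inhomogeneous coboundary operator of bounded cohomology, for an action `π` of
`G` on `E`:
`(δf)(g₁,…,g_{n+1}) = g₁•f(g₂,…,g_{n+1}) + ∑_{i=1}^{n} (−1)^i f(g₁,…,g_i·g_{i+1},…,g_{n+1})`
`+ (−1)^{n+1} f(g₁,…,g_n)`. -/
def bddDelta {G : Type*} [Group G] {E : Type*} [NormedAddCommGroup E] [Module ℝ E]
    (π : G → E → E) (n : ℕ) (f : (Fin n → G) → E) : (Fin (n + 1) → G) → E :=
  fun g =>
    π (g 0) (f (fun j => g j.succ)) +
    (∑ i : Fin n, ((-1 : ℝ) ^ ((i : ℕ) + 1)) •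
      f (fun j => if (j : ℕ) < (i : ℕ) then g (Fin.castSucc j)
        else if (j : ℕ) = (i : ℕ) then g (Fin.castSucc j) * g j.succ
        else g j.succ)) +
    ((-1 : ℝ) ^ (n + 1)) • f (fun j => g (Fin.castSucc j))

/-- Vanishing of the bounded cohomology `Hb^n(G,E)` for all `n ≥ 1`, with respect to the
`G`-action `π` on `E`: every bounded cocycle of degree `n ≥ 1` is the coboundary of a
bounded cochain. -/
def HbVanish {G : Type*} [Group G] {E : Type*} [NormedAddCommGroup E] [Module ℝ E]
    (π : G → E → E) : Prop :=
  ∀ (n : ℕ) (f : (Fin (n + 1) → G) → E), IsBddCochain f →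
    bddDelta π (n + 1) f = 0 →
    ∃ b : (Fin n → G) → E, IsBddCochain b ∧ bddDelta π n b = f

/-- A group is boundedly acyclic if `Hb^n(G,ℝ) = 0` for all `n ≥ 1`, where `ℝ` carries
the trivial `G`-action. -/
def BoundedlyAcyclic (G : Type*) [Group G] : Prop :=
  HbVanish (G := G) (E := ℝ) (fun _ v => v)

/-- The contragredient action of `G` on the continuous dual of `F` induced by an
isometric action `ρ` of `G` on `F`: `(g • φ)(v) = φ (g⁻¹ • v)`. -/
def contragredient {G : Type*} [Group G] {F : Type*} [NormedAddCommGroup F]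
    [NormedSpace ℝ F] (ρ : G →* (F ≃ₗᵢ[ℝ] F)) : G → (F →L[ℝ] ℝ) → (F →L[ℝ] ℝ) :=
  fun g φ => φ.comp (ρ g⁻¹).toLinearIsometry.toContinuousLinearMap

/-!
The iterated commutator subgroup `D = G^(k)` is coamenable in `G`, because the successive quotients
of the derived series are abelian. A bounded `D`-equivariant primitive of a `G`-equivariant
homogeneous cocycle `f` can therefore be averaged into a `G`-equivariant one.

Over `D`, a primitive is obtained by coning `f` off along random elements of `G`, that is, by
averaging prisms against a mean on `G^(n+1)`. This works as soon as the mean is invariant under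
left translation of each coordinate by its own element of `D`, when tested on `G`-equivariant
functions such as `f`. To find such a mean, fix finitely many translations. By assumption they have
infinitely many conjugates that commute with one another. Multiply independent random words, the
`k`-th of them in the letters of the `k`-th conjugate. By commutation, translating the product by
a letter of the `k`-th conjugate amounts to prepending this letter to the `k`-th word, and this
multiplies the law of the words by a density depending on the `k`-th word alone. Once centred,
these densities are uniformly bounded and orthogonal for distinct `k`, so the effect of the
translation tends to zero as `k → ∞`, in norm because the dual is separable. Conjugating back acts
isometrically on the dual, and turns this asymptotic invariance into invariance.
-/

open Filter Topology MeasureTheory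
open scoped ENNReal NNReal

/-! ### Means and weak-* integrals -/

/-- A family of vectors that is bounded in norm. For cochains this is `IsBddCochain`. -/
def IsNormBdd {I E : Type*} [NormedAddCommGroup E] (φ : I → E) : Prop :=
  ∃ C : ℝ, ∀ i, ‖φ i‖ ≤ C

namespace IsNormBdd

variable {I J E : Type*} [NormedAddCommGroup E] {φ ψ : I → E}

lemma comp (h : IsNormBdd φ) (g : J → I) : IsNormBdd fun j => φ (g j) :=
  h.imp fun _ hC j => hC (g j)

lemma sub (hφ : IsNormBdd φ) (hψ : IsNormBdd ψ) : IsNormBdd fun i => φ i - ψ i := by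
  obtain ⟨C, hC⟩ := hφ
  obtain ⟨C', hC'⟩ := hψ
  exact ⟨C + C', fun i => norm_sub_le_of_le (hC i) (hC' i)⟩

lemma dual_apply {F : Type*} [NormedAddCommGroup F] [NormedSpace ℝ F]
    {φ : I → StrongDual ℝ F} (h : IsNormBdd φ) (v : F) : IsNormBdd fun i => φ i v := by
  obtain ⟨C, hC⟩ := h
  exact ⟨C * ‖v‖, fun i => (φ i).le_of_opNorm_le (hC i) v⟩

lemma dual_comp {F F' : Type*} [NormedAddCommGroup F] [NormedSpace ℝ F]
    [NormedAddCommGroup F'] [NormedSpace ℝ F'] {φ : I → StrongDual ℝ F} (h : IsNormBdd φ)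
    (A : F' →L[ℝ] F) : IsNormBdd fun i => (φ i).comp A := by
  obtain ⟨C, hC⟩ := h
  exact ⟨C * ‖A‖, fun i => (ContinuousLinearMap.opNorm_comp_le _ _).trans (by gcongr; exact hC i)⟩

end IsNormBdd

/-- A mean on `I`: a normalised functional of norm one on the bounded real functions on `I`.
It is defined on all functions for convenience; nothing is assumed about the values on unbounded
ones. -/
structure Mean (I : Type*) where
  toFun : (I → ℝ) → ℝ
  map_add' : ∀ φ ψ, IsNormBdd φ → IsNormBdd ψ → toFun (fun i => φ i + ψ i) = toFun φ + toFun ψ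
  map_smul' : ∀ (c : ℝ) φ, IsNormBdd φ → toFun (fun i => c * φ i) = c * toFun φ
  norm_le' : ∀ C φ, (∀ i, ‖φ i‖ ≤ C) → ‖toFun φ‖ ≤ C
  map_const' : ∀ c, toFun (fun _ => c) = c

namespace Mean

variable {I J : Type*}

instance : CoeFun (Mean I) fun _ => (I → ℝ) → ℝ := ⟨Mean.toFun⟩

lemma tendsto_limUnder_ultrafilter (U : Ultrafilter I) {φ : I → ℝ} (h : IsNormBdd φ) :
    Tendsto φ U (𝓝 (limUnder U φ)) := by
  obtain ⟨C, hC⟩ := h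
  have hmem : ↑(U.map φ) ≤ 𝓟 (Metric.closedBall (0 : ℝ) C) :=
    le_principal_iff.mpr <| Filter.mem_map.mpr <| Eventually.of_forall fun i =>
      mem_closedBall_zero_iff.mpr (hC i)
  obtain ⟨x, -, hx⟩ := (isCompact_closedBall (0 : ℝ) C).ultrafilter_le_nhds _ hmem
  exact tendsto_nhds_limUnder ⟨x, hx⟩

/-- The limit along an ultrafilter, as a mean. -/
noncomputable def ofUltrafilter (U : Ultrafilter I) : Mean I where
  toFun φ := limUnder U φ
  map_add' _ _ hφ hψ :=
    ((tendsto_limUnder_ultrafilter U hφ).add (tendsto_limUnder_ultrafilter U hψ)).limUnder_eq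
  map_smul' c _ hφ := ((tendsto_limUnder_ultrafilter U hφ).const_mul c).limUnder_eq
  norm_le' _ _ h :=
    le_of_tendsto (tendsto_limUnder_ultrafilter U ⟨_, h⟩).norm (Eventually.of_forall h)
  map_const' _ := tendsto_const_nhds.limUnder_eq

lemma isNormBdd_apply (M : J → Mean I) {φ : I → ℝ} (h : IsNormBdd φ) :
    IsNormBdd fun j => M j φ :=
  h.imp fun C hC j => (M j).norm_le' C φ hC

/-- The mean `φ ↦ ∫∫ φ(i) dN_j(i) dM(j)` obtained by averaging a family of means. -/
def bind (M : Mean J) (N : J → Mean I) : Mean I where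
  toFun φ := M fun j => N j φ
  map_add' φ ψ hφ hψ := by
    simp only [(N _).map_add' φ ψ hφ hψ,
      M.map_add' _ _ (isNormBdd_apply N hφ) (isNormBdd_apply N hψ)]
  map_smul' c φ hφ := by
    simp only [(N _).map_smul' c φ hφ, M.map_smul' _ _ (isNormBdd_apply N hφ)]
  norm_le' C φ h := M.norm_le' _ _ fun j => (N j).norm_le' C φ h
  map_const' c := by simp only [map_const']

/-- The push-forward of a mean. -/
def map (g : I → J) (M : Mean I) : Mean J where
  toFun φ := M fun i => φ (g i)
  map_add' _ _ hφ hψ := M.map_add' _ _ (hφ.comp g) (hψ.comp g)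
  map_smul' c _ hφ := M.map_smul' c _ (hφ.comp g)
  norm_le' _ _ h := M.norm_le' _ _ fun i => h (g i)
  map_const' := M.map_const'

/-- The limit of a family of means along an ultrafilter. -/
noncomputable def lim (U : Ultrafilter J) (M : J → Mean I) : Mean I := (ofUltrafilter U).bind M

lemma tendsto_lim (U : Ultrafilter J) (M : J → Mean I) {φ : I → ℝ} (h : IsNormBdd φ) :
    Tendsto (fun j => M j φ) U (𝓝 (lim U M φ)) :=
  tendsto_limUnder_ultrafilter U (isNormBdd_apply M h)

lemma map_sub' (M : Mean I) {φ ψ : I → ℝ} (hφ : IsNormBdd φ) (hψ : IsNormBdd ψ) :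
    M (fun i => φ i - ψ i) = M φ - M ψ := by
  rw [eq_sub_iff_add_eq, ← M.map_add' _ _ (hφ.sub hψ) hψ]
  simp only [sub_add_cancel]

lemma lim_eq_lim_of_tendsto_sub (U : Ultrafilter J) (M : J → Mean I) {φ ψ : I → ℝ}
    (hφ : IsNormBdd φ) (hψ : IsNormBdd ψ) (h : Tendsto (fun j => M j φ - M j ψ) U (𝓝 0)) :
    lim U M φ = lim U M ψ :=
  sub_eq_zero.mp <| tendsto_nhds_unique ((tendsto_lim U M hφ).sub (tendsto_lim U M hψ)) h

lemma lim_eq_lim_of_eventuallyEq (U : Ultrafilter J) (M : J → Mean I) {φ ψ : I → ℝ}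
    (h : ∀ᶠ j in U, M j φ = M j ψ) : lim U M φ = lim U M ψ :=
  congrArg Filter.lim (Filter.map_congr h)

/-- The uniform mean on a finite type. -/
noncomputable def uniform (I : Type*) [Fintype I] [Nonempty I] : Mean I where
  toFun φ := (∑ i, φ i) / Fintype.card I
  map_add' _ _ _ _ := by rw [Finset.sum_add_distrib, add_div]
  map_smul' _ _ _ := by rw [← Finset.mul_sum, mul_div_assoc]
  norm_le' C φ h := by
    have hcard : (0 : ℝ) < Fintype.card I := Nat.cast_pos.mpr Fintype.card_pos
    rw [norm_div, Real.norm_of_nonneg hcard.le, div_le_iff₀ hcard]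
    simpa [mul_comm] using norm_sum_le_of_le Finset.univ fun i _ => h i
  map_const' c := by
    rw [Finset.sum_const, Finset.card_univ, nsmul_eq_mul,
      mul_div_cancel_left₀ c (Nat.cast_ne_zero.mpr Fintype.card_ne_zero)]

lemma uniform_comp_equiv [Fintype I] [Nonempty I] (e : I ≃ I) (φ : I → ℝ) :
    uniform I (fun i => φ (e i)) = uniform I φ :=
  congrArg (· / _) (e.sum_comp φ)

/-- A Cesàro limit along a nonprincipal ultrafilter. -/
noncomputable def cesaro : Mean ℕ :=
  lim (hyperfilter ℕ) fun n => (uniform (Fin (n + 1))).map (↑)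

lemma cesaro_shift {φ : ℕ → ℝ} (h : IsNormBdd φ) :
    cesaro (fun i => φ (i + 1)) = cesaro φ := by
  refine lim_eq_lim_of_tendsto_sub _ _ (h.comp (· + 1)) h ?_
  have htelescope (n : ℕ) :
      uniform (Fin (n + 1)) (fun i => φ (i + 1)) - uniform (Fin (n + 1)) (fun i => φ i) =
        (φ (n + 1) - φ 0) * (1 / ((n : ℝ) + 1)) := by
    simp only [uniform]
    rw [← sub_div, ← Finset.sum_sub_distrib,
      Fin.sum_univ_eq_sum_range (fun i => φ (i + 1) - φ i), Finset.sum_range_sub, mul_one_div,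
      Fintype.card_fin, Nat.cast_succ]
  obtain ⟨C, hC⟩ := (h.comp (· + 1)).sub (h.comp fun _ : ℕ => 0)
  simp only [map, htelescope]
  refine Tendsto.mono_left ?_ Nat.hyperfilter_le_atTop
  exact tendsto_one_div_add_atTop_nhds_zero_nat.zero_mul_isBoundedUnder_le
    (isBoundedUnder_of ⟨C, hC⟩) |>.congr fun n => mul_comm _ _

section WeakIntegral

variable {F F' : Type*} [NormedAddCommGroup F] [NormedSpace ℝ F]
  [NormedAddCommGroup F'] [NormedSpace ℝ F']

open Classical in
/-- The weak-* (Gelfand) integral of a bounded family of functionals against a mean, with junk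
value `0` for unbounded families. -/
noncomputable def weakIntegral (M : Mean I) (φ : I → StrongDual ℝ F) : StrongDual ℝ F :=
  if h : IsNormBdd φ then
    LinearMap.mkContinuous
      { toFun := fun v => M fun i => φ i v
        map_add' := fun v w => by
          simp only [map_add, M.map_add' _ _ (h.dual_apply v) (h.dual_apply w)]
        map_smul' := fun c v => by
          simp only [map_smul, smul_eq_mul, M.map_smul' _ _ (h.dual_apply v), RingHom.id_apply] }
      h.choose fun v => M.norm_le' _ _ fun i => (φ i).le_of_opNorm_le (h.choose_spec i) v
  else 0

lemma weakIntegral_apply (M : Mean I) {φ : I → StrongDual ℝ F} (h : IsNormBdd φ) (v : F) :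
    M.weakIntegral φ v = M fun i => φ i v := by
  rw [weakIntegral, dif_pos h]
  rfl

lemma norm_weakIntegral_le (M : Mean I) {φ : I → StrongDual ℝ F} {C : ℝ}
    (h : ∀ i, ‖φ i‖ ≤ C) : ‖M.weakIntegral φ‖ ≤ C := by
  have hC : 0 ≤ C :=
    (norm_nonneg _).trans (M.norm_le' C (fun i => ‖φ i‖) fun i => (norm_norm _).trans_le (h i))
  refine ContinuousLinearMap.opNorm_le_bound _ hC fun v => ?_
  rw [M.weakIntegral_apply ⟨C, h⟩]
  exact M.norm_le' _ _ fun i => (φ i).le_of_opNorm_le (h i) v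

lemma weakIntegral_sub (M : Mean I) {φ ψ : I → StrongDual ℝ F} (hφ : IsNormBdd φ)
    (hψ : IsNormBdd ψ) :
    M.weakIntegral (fun i => φ i - ψ i) = M.weakIntegral φ - M.weakIntegral ψ := by
  ext v
  rw [M.weakIntegral_apply (hφ.sub hψ), sub_apply, M.weakIntegral_apply hφ,
    M.weakIntegral_apply hψ]
  exact M.map_sub' (hφ.dual_apply v) (hψ.dual_apply v)

lemma weakIntegral_comp (M : Mean I) {φ : I → StrongDual ℝ F} (h : IsNormBdd φ)
    (A : F' →L[ℝ] F) :
    M.weakIntegral (fun i => (φ i).comp A) = (M.weakIntegral φ).comp A := by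
  ext v
  rw [M.weakIntegral_apply (h.dual_comp A), ContinuousLinearMap.comp_apply,
    M.weakIntegral_apply h]
  rfl

lemma weakIntegral_const (M : Mean I) (e : StrongDual ℝ F) :
    M.weakIntegral (fun _ => e) = e := by
  ext v
  rw [M.weakIntegral_apply ⟨‖e‖, fun _ => le_rfl⟩, M.map_const']

end WeakIntegral

end Mean

/-! ### Coamenable subgroups -/

section Coamenable

variable {G : Type*} [Group G]

/-- `D` is coamenable in `G` if the bounded functions on `G ⧸ D` carry a `G`-invariant mean.
Functions on `G ⧸ D` are encoded as right `D`-invariant functions on `G`, and the mean as one on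
all of `G`. -/
def IsCoamenable (D : Subgroup G) : Prop :=
  ∃ M : Mean G, ∀ (g : G) (φ : G → ℝ), IsNormBdd φ → (∀ x, ∀ d ∈ D, φ (x * d) = φ x) →
    M (fun x => φ (g * x)) = M φ

lemma exists_mean_invariant_of_finset {A : Type*} [CommGroup A] (s : Finset A) :
    ∃ m : Mean A, ∀ a ∈ s, ∀ φ : A → ℝ, IsNormBdd φ → m (fun x => φ (a * x)) = m φ := by
  classical
  induction s using Finset.induction_on with
  | empty => exact ⟨Mean.ofUltrafilter (pure 1), by simp⟩
  | insert a s _ ih =>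
    obtain ⟨m, hm⟩ := ih
    refine ⟨Mean.cesaro.bind fun i => m.map (a ^ i * ·), fun b hb φ hφ => ?_⟩
    have hbdd := Mean.isNormBdd_apply (fun i : ℕ => m.map (a ^ i * ·)) hφ
    change Mean.cesaro (fun i => m fun x => φ (b * (a ^ i * x))) =
      Mean.cesaro (fun i => m fun x => φ (a ^ i * x))
    rcases Finset.mem_insert.mp hb with rfl | hb
    · simpa only [← mul_assoc, ← pow_succ', Mean.map] using Mean.cesaro_shift hbdd
    · simp only [mul_left_comm b, fun i : ℕ => hm b hb (fun x => φ (a ^ i * x)) (hφ.comp _)]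

theorem exists_invariant_mean (A : Type*) [CommGroup A] :
    ∃ m : Mean A, ∀ a, ∀ φ : A → ℝ, IsNormBdd φ → m (fun x => φ (a * x)) = m φ := by
  choose m hm using exists_mean_invariant_of_finset (A := A)
  refine ⟨Mean.lim (Ultrafilter.of atTop) m, fun a φ hφ => ?_⟩
  refine Mean.lim_eq_lim_of_eventuallyEq _ _ ?_
  exact Ultrafilter.of_le _ ((eventually_ge_atTop {a}).mono fun s hs =>
    hm s a (Finset.singleton_subset_iff.mp hs) φ hφ)

theorem isCoamenable_of_invariant_mean_quotient {N : Subgroup G} [N.Normal] {m : Mean (G ⧸ N)}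
    (hm : ∀ q, ∀ φ : G ⧸ N → ℝ, IsNormBdd φ → m (fun x => φ (q * x)) = m φ) :
    IsCoamenable N := by
  refine ⟨m.map Quotient.out, fun g φ hφ hN => ?_⟩
  have hout (x : G) : φ (Quotient.out (x : G ⧸ N)) = φ x := by
    obtain ⟨d, hd⟩ := QuotientGroup.mk_out_eq_mul N x
    rw [hd, hN x d d.2]
  have htranslate (q : G ⧸ N) : φ (g * q.out) = φ (Quotient.out ((g : G ⧸ N) * q)) := by
    rw [← hout (g * q.out), QuotientGroup.mk_mul, QuotientGroup.out_eq']
  change m (fun q => φ (g * q.out)) = m fun q => φ q.out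
  simp only [htranslate]
  exact hm g (fun q => φ q.out) (hφ.comp _)

theorem isCoamenable_commutator (G : Type*) [Group G] : IsCoamenable (commutator G) := by
  obtain ⟨m, hm⟩ := exists_invariant_mean (Abelianization G)
  exact isCoamenable_of_invariant_mean_quotient hm

theorem IsCoamenable.trans {H : Subgroup G} {K : Subgroup H} (hH : IsCoamenable H)
    (hK : IsCoamenable K) : IsCoamenable (K.map H.subtype) := by
  obtain ⟨M, hM⟩ := hH
  obtain ⟨m, hm⟩ := hK
  refine ⟨M.bind fun x => m.map fun h : H => x * h, fun g φ hφ hinv => ?_⟩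
  have hbdd := Mean.isNormBdd_apply (fun x : G => m.map fun h : H => x * h) hφ
  have hright (x d : G) (hd : d ∈ H) :
      m (fun h : H => φ (x * d * h)) = m fun h : H => φ (x * h) := by
    simpa only [mul_assoc, Subgroup.coe_mul] using
      hm ⟨d, hd⟩ (fun h => φ (x * h)) (hφ.comp _) fun h k hk => by
        rw [Subgroup.coe_mul, ← mul_assoc]
        exact hinv _ k ⟨k, hk, rfl⟩
  change M (fun x => m fun h : H => φ (g * (x * h))) = M fun x => m fun h : H => φ (x * h)
  simpa only [mul_assoc] using hM g (fun x => m fun h : H => φ (x * h)) hbdd hright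

theorem isCoamenable_top (G : Type*) [Group G] : IsCoamenable (⊤ : Subgroup G) :=
  ⟨Mean.ofUltrafilter (pure 1), fun g φ _ h => by
    have hconst (x : G) : φ x = φ 1 := by simpa using h 1 x trivial
    rw [funext hconst]⟩

theorem isCoamenable_derivedSeries (G : Type*) [Group G] (k : ℕ) :
    IsCoamenable (derivedSeries G k) := by
  induction k with
  | zero => exact isCoamenable_top G
  | succ k ih =>
    rw [derivedSeries_succ, ← Subgroup.map_subtype_commutator]
    exact ih.trans (isCoamenable_commutator _)

end Coamenable

/-! ### Homogeneous cochains -/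

section Homogeneous

variable {X Y E E' : Type*} [AddCommGroup E] [AddCommGroup E']

/-- The homogeneous coboundary, the alternating sum over all omissions of one entry. Cochains of
all degrees are encoded together as functions on lists. -/
def homDelta : (List X → E) → List X → E
  | _, [] => 0
  | f, x :: l => f l - homDelta (fun l' => f (x :: l')) l

/-- The prism operator, a chain homotopy between the two projections of `X × X` onto `X`. -/
def prism : (List X → E) → List (X × X) → E
  | _, [] => 0
  | f, p :: l => f (p.1 :: p.2 :: l.map Prod.snd) - prism (fun l' => f (p.1 :: l')) l

lemma homDelta_sub (f g : List X → E) (l : List X) :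
    homDelta (fun l => f l - g l) l = homDelta f l - homDelta g l := by
  induction l generalizing f g with
  | nil => simp only [homDelta, sub_zero]
  | cons a l ih => simp only [homDelta, ih]; abel

lemma homDelta_homDelta (f : List X → E) (l : List X) : homDelta (homDelta f) l = 0 := by
  induction l generalizing f with
  | nil => rfl
  | cons a l ih => simp only [homDelta, homDelta_sub, ih]; abel

lemma homDelta_map (f : List Y → E) (h : X → Y) (l : List X) :
    homDelta f (l.map h) = homDelta (fun l' => f (l'.map h)) l := by
  induction l generalizing f with
  | nil => rfl
  | cons a l ih => simp only [List.map_cons, homDelta, ih]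

lemma homDelta_addHom (A : E →+ E') (f : List X → E) (l : List X) :
    homDelta (fun l' => A (f l')) l = A (homDelta f l) := by
  induction l generalizing f with
  | nil => simp only [homDelta, map_zero]
  | cons a l ih => simp only [homDelta, ih, map_sub]

lemma homDelta_const (c : E) (l : List X) :
    homDelta (fun _ => c) l = if Even l.length then 0 else c := by
  induction l with
  | nil => simp only [homDelta, List.length_nil, Even.zero, if_true]
  | cons a l ih =>
    simp only [homDelta, ih, List.length_cons, Nat.even_add_one]
    split_ifs <;> simp only [sub_zero, sub_self]

lemma homDelta_ofFn {m : ℕ} (f : List X → E) (p : Fin (m + 1) → X) :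
    homDelta f (List.ofFn p) =
      ∑ i : Fin (m + 1), (-1 : ℤ) ^ (i : ℕ) • f (List.ofFn (p ∘ i.succAbove)) := by
  induction m generalizing f with
  | zero => simp [homDelta]
  | succ m ih =>
    have hface (i : Fin (m + 1)) :
        List.ofFn (p ∘ i.succ.succAbove) =
          p 0 :: List.ofFn ((fun j => p j.succ) ∘ i.succAbove) := by
      rw [List.ofFn_succ]
      simp [Function.comp_def]
    rw [Fin.sum_univ_succ, List.ofFn_succ, homDelta, ih]
    simp only [hface, Fin.val_zero, pow_zero, one_smul, Fin.val_succ, pow_succ, mul_neg_one,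
      neg_smul, Finset.sum_neg_distrib, sub_eq_add_neg]
    rfl

lemma homDelta_congr {m : ℕ} {f g : List X → E}
    (h : ∀ p : Fin m → X, f (List.ofFn p) = g (List.ofFn p)) (p : Fin (m + 1) → X) :
    homDelta f (List.ofFn p) = homDelta g (List.ofFn p) := by
  simp only [homDelta_ofFn, h]

lemma prism_sub (f g : List X → E) (l : List (X × X)) :
    prism (fun l => f l - g l) l = prism f l - prism g l := by
  induction l generalizing f g with
  | nil => simp only [prism, sub_zero]
  | cons a l ih => simp only [prism, ih]; abel

lemma prism_zero (l : List (X × X)) : prism (fun _ => (0 : E)) l = 0 := by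
  induction l with
  | nil => rfl
  | cons a l ih => simp only [prism, ih, sub_zero]

lemma prism_addHom (A : E →+ E') (f : List X → E) (l : List (X × X)) :
    prism (fun l' => A (f l')) l = A (prism f l) := by
  induction l generalizing f with
  | nil => simp only [prism, map_zero]
  | cons a l ih => simp only [prism, ih, map_sub]

lemma prism_map (f : List Y → E) (h : X → Y) (l : List (X × X)) :
    prism f (l.map (Prod.map h h)) = prism (fun l' => f (l'.map h)) l := by
  induction l generalizing f with
  | nil => rfl
  | cons a l ih =>
    simp only [List.map_cons, prism, ih, Prod.map_fst, Prod.map_snd, List.map_map]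
    rfl

theorem homDelta_prism_add_prism_homDelta (f : List X → E) (l : List (X × X)) :
    homDelta (prism f) l + prism (homDelta f) l =
      f (l.map Prod.snd) - f (l.map Prod.fst) := by
  induction l generalizing f with
  | nil => simp only [homDelta, prism, List.map_nil, sub_self, add_zero]
  | cons p l ih =>
    have htail : prism (fun l' => homDelta (fun l'' => f (p.1 :: l'')) l') l =
        f (p.1 :: l.map Prod.snd) - f (p.1 :: l.map Prod.fst) -
          homDelta (prism fun l' => f (p.1 :: l')) l :=
      eq_sub_of_add_eq' (ih fun l' => f (p.1 :: l'))
    simp only [homDelta, prism, List.map_cons, prism_sub, homDelta_sub, htail,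
      homDelta_map (fun l' => f (p.1 :: p.2 :: l'))]
    abel

end Homogeneous

lemma norm_prism_le {X E : Type*} [NormedAddCommGroup E] {f : List X → E} {C : ℝ}
    (h : ∀ l, ‖f l‖ ≤ C) (l : List (X × X)) : ‖prism f l‖ ≤ l.length * C := by
  induction l generalizing f with
  | nil => simp [prism]
  | cons p l ih =>
    refine (norm_sub_le_of_le (h _) (ih fun l' => h (p.1 :: l'))).trans_eq ?_
    push_cast [List.length_cons]
    ring

lemma IsNormBdd.homDelta {I X E : Type*} [NormedAddCommGroup E] {φ : I → List X → E}
    (h : ∀ l, IsNormBdd fun i => φ i l) (l : List X) :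
    IsNormBdd fun i => homDelta (φ i) l := by
  induction l generalizing φ with
  | nil => exact ⟨0, fun _ => norm_zero.le⟩
  | cons x l ih => exact (h l).sub (ih fun l' => h (x :: l'))

lemma homDelta_weakIntegral {I X F : Type*} [NormedAddCommGroup F] [NormedSpace ℝ F]
    (M : Mean I) {φ : I → List X → StrongDual ℝ F} (h : ∀ l, IsNormBdd fun i => φ i l)
    (l : List X) :
    homDelta (fun l' => M.weakIntegral fun i => φ i l') l =
      M.weakIntegral fun i => homDelta (φ i) l := by
  induction l generalizing φ with
  | nil => exact (M.weakIntegral_const 0).symm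
  | cons x l ih =>
    have htail := fun l' => h (x :: l')
    simp only [homDelta, ih htail, M.weakIntegral_sub (h l) (IsNormBdd.homDelta htail l)]

section Equivariant

variable {G : Type*} [Group G] {E : Type*} [NormedAddCommGroup E] [NormedSpace ℝ E]

/-- Equivariance of a homogeneous cochain under the elements of a subgroup `D`. -/
def IsEquivariant (D : Subgroup G) (π : G →* (E ≃ₗᵢ[ℝ] E)) (f : List G → E) : Prop :=
  ∀ d ∈ D, ∀ l, f (l.map (d * ·)) = π d (f l)

variable {π : G →* (E ≃ₗᵢ[ℝ] E)}

lemma IsEquivariant.mono {D D' : Subgroup G} {f : List G → E} (h : IsEquivariant D' π f)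
    (hD : D ≤ D') : IsEquivariant D π f := fun d hd => h d (hD hd)

lemma bddDelta_ofFn_partialProd {m : ℕ} {B : List G → E} (hB : IsEquivariant ⊤ π B)
    (g : Fin (m + 1) → G) :
    bddDelta (fun g => π g) m (fun h => B (List.ofFn (Fin.partialProd h))) g =
      homDelta B (List.ofFn (Fin.partialProd g)) := by
  have hfirst : π (g 0) (B (List.ofFn (Fin.partialProd fun j => g j.succ))) =
      B (List.ofFn (Fin.partialProd g ∘ Fin.succ)) := by
    rw [← hB _ trivial, List.map_ofFn]
    congr 2
    ext j
    exact (Fin.partialProd_succ' g j).symm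
  have hlast : (fun j : Fin m => g j.castSucc) = (Fin.last m).contractNth (· * ·) g := by
    ext j
    simp [Fin.contractNth]
  rw [homDelta_ofFn, Fin.sum_univ_succ, Fin.sum_univ_castSucc]
  simp only [bddDelta, Fin.val_zero, pow_zero, one_smul, Fin.val_succ, Fin.val_castSucc,
    Fin.val_last, ← Fin.partialProd_contractNth, hlast, add_assoc, hfirst]
  congr 1
  simp only [← Int.cast_smul_eq_zsmul ℝ]
  push_cast
  rfl

/-- The homogeneous cochain associated with the inhomogeneous cochain `f` of degree `m`; it
vanishes on lists whose length is not `m + 1`. -/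
noncomputable def homogenise (π : G →* (E ≃ₗᵢ[ℝ] E)) {m : ℕ} (f : (Fin m → G) → E)
    (l : List G) : E :=
  if h : l.length = m + 1 then
    let p : Fin (m + 1) → G := fun i => l.get (i.cast h.symm)
    π (p 0) (f fun i => (p i.castSucc)⁻¹ * p i.succ)
  else 0

lemma homogenise_ofFn (π : G →* (E ≃ₗᵢ[ℝ] E)) {m : ℕ} (f : (Fin m → G) → E)
    (p : Fin (m + 1) → G) :
    homogenise π f (List.ofFn p) = π (p 0) (f fun i => (p i.castSucc)⁻¹ * p i.succ) := by
  have hget (i : Fin (m + 1)) :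
      (List.ofFn p).get (i.cast (List.length_ofFn (f := p)).symm) = p i := by
    rw [List.get_ofFn, Fin.cast_cast, Fin.cast_eq_self]
  simp only [homogenise, List.length_ofFn, dif_pos, hget]

lemma homogenise_of_length_ne {m : ℕ} (f : (Fin m → G) → E) {l : List G}
    (hl : l.length ≠ m + 1) : homogenise π f l = 0 := dif_neg hl

lemma homogenise_ofFn_partialProd {m : ℕ} (f : (Fin m → G) → E) (g : Fin m → G) :
    homogenise π f (List.ofFn (Fin.partialProd g)) = f g := by
  simp only [homogenise_ofFn, Fin.partialProd_right_inv, Fin.partialProd_zero, map_one,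
    LinearIsometryEquiv.coe_one, id_eq]

lemma exists_eq_ofFn {X : Type*} {m : ℕ} {l : List X} (hl : l.length = m) :
    ∃ p : Fin m → X, l = List.ofFn p := by
  subst hl
  exact ⟨l.get, (List.ofFn_get l).symm⟩

lemma isEquivariant_homogenise {m : ℕ} (f : (Fin m → G) → E) :
    IsEquivariant ⊤ π (homogenise π f) := by
  intro d _ l
  by_cases hl : l.length = m + 1
  · obtain ⟨p, rfl⟩ := exists_eq_ofFn hl
    simp only [List.map_ofFn, homogenise_ofFn, Function.comp_apply, map_mul,
      LinearIsometryEquiv.coe_mul, mul_inv_rev, mul_assoc, inv_mul_cancel_left]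
  · rw [homogenise_of_length_ne f hl, homogenise_of_length_ne f (by rwa [List.length_map]),
      map_zero]

lemma isNormBdd_homogenise {m : ℕ} {f : (Fin m → G) → E} (hf : IsNormBdd f) :
    IsNormBdd (homogenise π f) := by
  obtain ⟨C, hC⟩ := hf
  refine ⟨C, fun l => ?_⟩
  by_cases hl : l.length = m + 1
  · obtain ⟨p, rfl⟩ := exists_eq_ofFn hl
    rw [homogenise_ofFn, LinearIsometryEquiv.norm_map]
    exact hC _
  · rw [homogenise_of_length_ne f hl, norm_zero]
    exact (norm_nonneg _).trans (hC 1)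

lemma homDelta_homogenise {m : ℕ} {f : (Fin m → G) → E} (hf : bddDelta (fun g => π g) m f = 0)
    (l : List G) : homDelta (homogenise π f) l = 0 := by
  obtain hl | ⟨r, hl⟩ : l.length = 0 ∨ ∃ r, l.length = r + 1 :=
    (Nat.eq_zero_or_eq_succ_pred _).imp_right fun h => ⟨_, h⟩
  · rw [List.length_eq_zero_iff.mp hl, homDelta]
  obtain ⟨p, rfl⟩ := exists_eq_ofFn hl
  by_cases hr : r = m + 1
  · subst hr
    set g : Fin (m + 1) → G := fun i => (p i.castSucc)⁻¹ * p i.succ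
    have hp : List.ofFn p = (List.ofFn (Fin.partialProd g)).map (p 0 * ·) := by
      rw [List.map_ofFn]
      exact congrArg List.ofFn (Fin.partialProd_left_inv p).symm
    have hzero : homDelta (homogenise π f) (List.ofFn (Fin.partialProd g)) = 0 := by
      simpa only [homogenise_ofFn_partialProd, hf, Pi.zero_apply] using
        (bddDelta_ofFn_partialProd (isEquivariant_homogenise (π := π) f) g).symm
    rw [hp, homDelta_map]
    simp only [isEquivariant_homogenise f (p 0) trivial]
    rw [← map_zero (π (p 0)), ← hzero]
    exact homDelta_addHom (π (p 0)).toLinearEquiv.toLinearMap.toAddMonoidHom _ _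
  · rw [homDelta_ofFn]
    exact Finset.sum_eq_zero fun i _ => by
      rw [homogenise_of_length_ne f (by rwa [List.length_ofFn]), smul_zero]

theorem hbVanish_of_homogeneous
    (H : ∀ (n : ℕ) (f : List G → E), IsNormBdd f → (∀ l, homDelta f l = 0) →
      IsEquivariant ⊤ π f → ∃ B : List G → E, IsNormBdd B ∧ IsEquivariant ⊤ π B ∧
        ∀ p : Fin (n + 2) → G, homDelta B (List.ofFn p) = f (List.ofFn p)) :
    HbVanish fun g => π g := by
  intro n f hf hδ
  obtain ⟨B, hBbdd, hBequiv, hB⟩ := H n _ (isNormBdd_homogenise hf) (homDelta_homogenise hδ)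
    (isEquivariant_homogenise f)
  refine ⟨fun h => B (List.ofFn (Fin.partialProd h)), hBbdd.comp _, funext fun g => ?_⟩
  rw [bddDelta_ofFn_partialProd hBequiv, hB, homogenise_ofFn_partialProd]

end Equivariant

/-! ### Primitives from invariant means -/

section Primitive

variable {G : Type*} [Group G] {F : Type*} [NormedAddCommGroup F] [NormedSpace ℝ F]

/-- The contragredient action as a group of isometries of the dual. -/
def contragredientHom (ρ : G →* (F ≃ₗᵢ[ℝ] F)) :
    G →* (StrongDual ℝ F ≃ₗᵢ[ℝ] StrongDual ℝ F) where
  toFun g :=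
    { toFun := contragredient ρ g
      invFun := contragredient ρ g⁻¹
      map_add' := fun _ _ => rfl
      map_smul' := fun _ _ => rfl
      left_inv := fun φ => by ext v; simp [contragredient]
      right_inv := fun φ => by ext v; simp [contragredient]
      norm_map' := fun φ => ContinuousLinearMap.opNorm_comp_linearIsometryEquiv φ (ρ g⁻¹) }
  map_one' := by
    ext φ v
    change φ (ρ 1⁻¹ v) = φ v
    simp
  map_mul' g h := by
    ext φ v
    change φ (ρ (g * h)⁻¹ v) = φ (ρ h⁻¹ (ρ g⁻¹ v))
    simp

lemma contragredientHom_apply (ρ : G →* (F ≃ₗᵢ[ℝ] F)) (g : G) (φ : StrongDual ℝ F) (v : F) :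
    contragredientHom ρ g φ v = φ (ρ g⁻¹ v) := rfl

variable {ρ : G →* (F ≃ₗᵢ[ℝ] F)}

lemma Mean.weakIntegral_contragredient {I : Type*} (M : Mean I) {φ : I → StrongDual ℝ F}
    (h : IsNormBdd φ) (g : G) :
    M.weakIntegral (fun i => contragredientHom ρ g (φ i)) =
      contragredientHom ρ g (M.weakIntegral φ) :=
  M.weakIntegral_comp h _

/-- The averaged primitive is `l ↦ ∫ x • B (x⁻¹ l) dM(x)`. -/
theorem IsCoamenable.exists_equivariant_primitive {D : Subgroup G} (hD : IsCoamenable D) {m : ℕ}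
    {f B : List G → StrongDual ℝ F} (hf : IsEquivariant ⊤ (contragredientHom ρ) f)
    (hBbdd : IsNormBdd B) (hBequiv : IsEquivariant D (contragredientHom ρ) B)
    (hB : ∀ p : Fin m → G, homDelta B (List.ofFn p) = f (List.ofFn p)) :
    ∃ B' : List G → StrongDual ℝ F, IsNormBdd B' ∧ IsEquivariant ⊤ (contragredientHom ρ) B' ∧
      ∀ p : Fin m → G, homDelta B' (List.ofFn p) = f (List.ofFn p) := by
  obtain ⟨M, hM⟩ := hD
  obtain ⟨C, hC⟩ := hBbdd
  set π := contragredientHom ρ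
  set τ : G → List G → StrongDual ℝ F := fun x l => π x (B (l.map (x⁻¹ * ·))) with hτ
  have hτbdd (l : List G) : IsNormBdd fun x => τ x l :=
    ⟨C, fun x => ((π x).norm_map _).trans_le (hC _)⟩
  have hτright (x d : G) (hd : d ∈ D) (l : List G) : τ (x * d) l = τ x l := by
    have hl : l.map ((x * d)⁻¹ * ·) = (l.map (x⁻¹ * ·)).map (d⁻¹ * ·) := by
      simp [List.map_map, Function.comp_def, mul_assoc]
    simp only [hτ, hl, hBequiv _ (D.inv_mem hd), map_mul, map_inv, LinearIsometryEquiv.coe_mul,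
      Function.comp_apply]
    simp
  refine ⟨fun l => M.weakIntegral fun x => τ x l, ⟨C, fun l => ?_⟩, fun g _ l => ?_, fun p => ?_⟩
  · exact M.norm_weakIntegral_le fun x => ((π x).norm_map _).trans_le (hC _)
  · have htranslate (x : G) : π g (τ x l) = τ (g * x) (l.map (g * ·)) := by
      simp [hτ, List.map_map, Function.comp_def]
    rw [← M.weakIntegral_contragredient (hτbdd l)]
    change _ = M.weakIntegral fun x => π g (τ x l)
    simp only [htranslate]
    ext v
    rw [M.weakIntegral_apply (hτbdd _), M.weakIntegral_apply ((hτbdd _).comp _)]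
    exact (hM g _ ((hτbdd _).dual_apply v) fun x d hd => by rw [hτright x d hd]).symm
  · have hδτ (x : G) : homDelta (τ x) (List.ofFn p) = f (List.ofFn p) := by
      have hδ : homDelta (τ x) (List.ofFn p) =
          π x (homDelta (fun l => B (l.map (x⁻¹ * ·))) (List.ofFn p)) :=
        homDelta_addHom (π x).toLinearEquiv.toLinearMap.toAddMonoidHom _ _
      rw [hδ, ← homDelta_map, List.map_ofFn, hB, ← List.map_ofFn, hf _ trivial]
      simp
    simp only [homDelta_weakIntegral M hτbdd, hδτ, M.weakIntegral_const]

lemma exists_equivariant_retraction (D : Subgroup G) :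
    ∃ β : G → D, ∀ (d : D) x, β (d * x) = d * β x := by
  obtain ⟨T, hT, -⟩ := D.exists_isComplement_right 1
  exact ⟨fun x => (hT.equiv x).1, fun d x => congrArg Prod.fst (hT.equiv_mul_left d x)⟩

/-- The prism between the first coordinates `x` of a list of labelled elements and the elements
`β x * y i`, where `i` is the label of `x`. -/
def labelledPrism {ι E : Type*} [AddCommGroup E] (β : G → G) (f : List G → E) (y : ι → G)
    (L : List (G × ι)) : E :=
  prism f (L.map fun q => (q.1, β q.1 * y q.2))

lemma isNormBdd_labelledPrism {ι E : Type*} [NormedAddCommGroup E] (β : G → G)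
    {f : List G → E} (hf : IsNormBdd f) (L : List (G × ι)) :
    IsNormBdd fun y => labelledPrism β f y L := by
  obtain ⟨C, hC⟩ := hf
  exact ⟨L.length * C, fun y => (norm_prism_le hC _).trans_eq (by rw [List.length_map])⟩

lemma homDelta_labelledPrism {ι E : Type*} [AddCommGroup E] (β : G → G) {f : List G → E}
    (hf : ∀ l, homDelta f l = 0) (y : ι → G) (L : List (G × ι)) :
    homDelta (labelledPrism β f y) L =
      f (L.map fun q => β q.1 * y q.2) - f (L.map Prod.fst) := by
  have h := homDelta_prism_add_prism_homDelta f (L.map fun q => (q.1, β q.1 * y q.2))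
  rw [funext hf, prism_zero, add_zero, homDelta_map, List.map_map, List.map_map] at h
  exact h

lemma zip_ofFn {X Y : Type*} {m : ℕ} (a : Fin m → X) (b : Fin m → Y) :
    (List.ofFn a).zip (List.ofFn b) = List.ofFn fun i => (a i, b i) :=
  List.ext_getElem (by simp) (by simp)

/-- The cone over `f` in the direction of the random elements `β (x i) * y i`. Label `0` is left
out: a list of length `m` uses the labels `1, …, m`. -/
noncomputable def meanCone {m : ℕ} (M : Mean (Fin (m + 1) → G)) (β : G → G)
    (f : List G → StrongDual ℝ F) (l : List G) : StrongDual ℝ F :=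
  M.weakIntegral fun y => labelledPrism β f y (l.zip (List.ofFn Fin.succ))

section MeanCone

variable {m : ℕ} {M : Mean (Fin (m + 1) → G)} {β : G → G} {f : List G → StrongDual ℝ F}

lemma isNormBdd_meanCone (hf : IsNormBdd f) : IsNormBdd (meanCone M β f) := by
  obtain ⟨C, hC⟩ := hf
  have hC0 : 0 ≤ C := (norm_nonneg _).trans (hC [])
  refine ⟨m * C, fun l => M.norm_weakIntegral_le fun y => ?_⟩
  refine (norm_prism_le hC _).trans ?_
  gcongr
  simp

lemma isEquivariant_meanCone {D : Subgroup G} (hβ : ∀ d ∈ D, ∀ x, β (d * x) = d * β x)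
    (hfbdd : IsNormBdd f) (hf : IsEquivariant D (contragredientHom ρ) f) :
    IsEquivariant D (contragredientHom ρ) (meanCone M β f) := by
  intro d hd l
  rw [meanCone, meanCone,
    ← M.weakIntegral_contragredient (isNormBdd_labelledPrism β hfbdd _)]
  congr 1 with y : 1
  have hlist : ((l.map (d * ·)).zip (List.ofFn Fin.succ)).map (fun q => (q.1, β q.1 * y q.2)) =
      ((l.zip (List.ofFn Fin.succ)).map fun q => (q.1, β q.1 * y q.2)).map
        (Prod.map (d * ·) (d * ·)) := by
    simp only [List.zip_map_left, List.map_map]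
    refine List.map_congr_left fun q _ => ?_
    simp [hβ d hd, mul_assoc]
  rw [labelledPrism, hlist, prism_map, funext (hf d hd)]
  exact prism_addHom (contragredientHom ρ d).toLinearEquiv.toLinearMap.toAddMonoidHom f _

/-- Permutation invariance makes the faces of the cone independent of the omitted label. -/
lemma meanCone_ofFn_succAbove (hf : IsNormBdd f)
    (hperm : ∀ (σ : Equiv.Perm (Fin (m + 1))) (φ : (Fin (m + 1) → G) → ℝ), IsNormBdd φ →
      M (fun y => φ (y ∘ σ)) = M φ)
    (p : Fin (m + 1) → G) (i : Fin (m + 1)) :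
    meanCone M β f (List.ofFn (p ∘ i.succAbove)) =
      M.weakIntegral fun y =>
        labelledPrism β f y (List.ofFn ((fun j => (p j, j)) ∘ i.succAbove)) := by
  have hbdd := isNormBdd_labelledPrism (ι := Fin (m + 1)) β hf
  ext v
  rw [meanCone, M.weakIntegral_apply (hbdd _), M.weakIntegral_apply (hbdd _),
    ← hperm i.cycleRange.symm _ ((hbdd _).dual_apply v)]
  simp only [labelledPrism, zip_ofFn, List.map_ofFn, Function.comp_def, Fin.cycleRange_symm_succ]

lemma homDelta_meanCone (hfbdd : IsNormBdd f) (hf : ∀ l, homDelta f l = 0)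
    (hperm : ∀ (σ : Equiv.Perm (Fin (m + 1))) (φ : (Fin (m + 1) → G) → ℝ), IsNormBdd φ →
      M (fun y => φ (y ∘ σ)) = M φ)
    (p : Fin (m + 1) → G) :
    homDelta (meanCone M β f) (List.ofFn p) =
      M.weakIntegral (fun y => f (List.ofFn fun i => β (p i) * y i)) - f (List.ofFn p) := by
  have hbdd := isNormBdd_labelledPrism (ι := Fin (m + 1)) β hfbdd
  have hfaces : homDelta (meanCone M β f) (List.ofFn p) =
      homDelta (fun L => M.weakIntegral fun y => labelledPrism β f y L)
        (List.ofFn fun j => (p j, j)) := by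
    simp only [homDelta_ofFn, meanCone_ofFn_succAbove hfbdd hperm]
  rw [hfaces, homDelta_weakIntegral M hbdd]
  simp only [homDelta_labelledPrism β hf, List.map_ofFn, Function.comp_def]
  rw [M.weakIntegral_sub (hfbdd.comp _) (hfbdd.comp _), M.weakIntegral_const]

end MeanCone

theorem exists_equivariant_primitive_of_mean {D : Subgroup G} {m : ℕ}
    {f : List G → StrongDual ℝ F} (hfbdd : IsNormBdd f) (hδf : ∀ l, homDelta f l = 0)
    (hf : IsEquivariant D (contragredientHom ρ) f) (M : Mean (Fin (m + 1) → G))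
    (hperm : ∀ (σ : Equiv.Perm (Fin (m + 1))) (φ : (Fin (m + 1) → G) → ℝ), IsNormBdd φ →
      M (fun y => φ (y ∘ σ)) = M φ)
    (hM : ∀ γ : Fin (m + 1) → D,
      M.weakIntegral (fun y => f (List.ofFn fun i => γ i * y i)) =
        M.weakIntegral fun y => f (List.ofFn y)) :
    ∃ B : List G → StrongDual ℝ F, IsNormBdd B ∧ IsEquivariant D (contragredientHom ρ) B ∧
      ∀ p : Fin (m + 1) → G, homDelta B (List.ofFn p) = f (List.ofFn p) := by
  obtain ⟨β, hβ⟩ := exists_equivariant_retraction D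
  set B := meanCone M (fun x => β x) f with hBdef
  set c := M.weakIntegral fun y => f (List.ofFn y) with hc
  have hδB (p : Fin (m + 1) → G) : homDelta B (List.ofFn p) = c - f (List.ofFn p) := by
    rw [hBdef, homDelta_meanCone hfbdd hδf hperm, hM fun i => β (p i)]
  have hcinv (d : G) (hd : d ∈ D) : contragredientHom ρ d c = c := by
    rw [hc, ← M.weakIntegral_contragredient (hfbdd.comp _), ← hc, ← hM fun _ => ⟨d, hd⟩]
    simp only [← hf d hd, List.map_ofFn, Function.comp_def]
  -- In even length `m + 1` the constant `c` has zero coboundary; but then `c = 0`, since applying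
  -- the coboundary to `hδB` on a list of odd length gives `0 = c - 0`.
  have hδc (p : Fin (m + 1) → G) : homDelta (fun _ => c) (List.ofFn p) = c := by
    rw [homDelta_const, List.length_ofFn]
    split_ifs with heven
    · have h := homDelta_congr (g := fun l => c - f l) hδB fun _ : Fin (m + 2) => (1 : G)
      rw [homDelta_homDelta, homDelta_sub, hδf, homDelta_const, List.length_ofFn,
        if_neg (Nat.even_add_one.not.mpr (not_not.mpr heven)), sub_zero] at h
      exact h
    · rfl
  refine ⟨fun l => c - B l, .sub ⟨‖c‖, fun _ => le_rfl⟩ (isNormBdd_meanCone hfbdd),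
    fun d hd l => ?_, fun p => ?_⟩
  · have hβD (d : G) (hd : d ∈ D) (x : G) : (β (d * x) : G) = d * β x :=
      congrArg Subtype.val (hβ ⟨d, hd⟩ x)
    rw [map_sub, hcinv d hd, ← isEquivariant_meanCone hβD hfbdd hf d hd l]
  · rw [homDelta_sub, hδc, hδB, sub_sub_cancel]

end Primitive

/-! ### Weak-* limits in a separable dual -/

section SeparableDual

open TopologicalSpace

variable {F : Type*} [NormedAddCommGroup F] [NormedSpace ℝ F]

lemma exists_norm_le_one_half_norm_le_apply (e : StrongDual ℝ F) :
    ∃ v : F, ‖v‖ ≤ 1 ∧ ‖e‖ / 2 ≤ ‖e v‖ := by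
  by_contra! h
  have he : ‖e‖ ≤ ‖e‖ / 2 :=
    e.opNorm_le_of_unit_norm (by positivity) fun v hv => (h v hv.le).le
  have h0 := h 0 (by simp only [norm_zero, zero_le_one])
  rw [map_zero, norm_zero] at h0
  linarith

lemma dense_of_forall_strongDual_eq_zero {W : Submodule ℝ F}
    (h : ∀ φ : StrongDual ℝ F, (∀ w ∈ W, φ w = 0) → φ = 0) : Dense (W : Set F) := by
  intro x
  rw [← Submodule.topologicalClosure_coe, SetLike.mem_coe, ← Submodule.Quotient.mk_eq_zero]
  have : IsClosed (W.topologicalClosure : Set F) := W.isClosed_topologicalClosure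
  refine SeparatingDual.eq_zero_of_forall_dual_eq_zero (R := ℝ) fun φ => ?_
  refine DFunLike.congr_fun (h (φ.comp W.topologicalClosure.mkQL) fun w hw => ?_) x
  have hw0 : W.topologicalClosure.mkQL w = 0 :=
    (Submodule.Quotient.mk_eq_zero _).mpr (W.le_topologicalClosure hw)
  rw [ContinuousLinearMap.comp_apply, hw0, map_zero]

theorem separableSpace_of_strongDual [SeparableSpace (StrongDual ℝ F)] : SeparableSpace F := by
  let e := denseSeq (StrongDual ℝ F)
  choose v hv hev using fun j => exists_norm_le_one_half_norm_le_apply (e j)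
  suffices hdense : Dense (Submodule.span ℝ (Set.range v) : Set F) from
    isSeparable_univ_iff.mp <|
      hdense.closure_eq ▸ ((Set.countable_range v).isSeparable.span (R := ℝ)).closure
  refine dense_of_forall_strongDual_eq_zero fun φ hφ => ?_
  by_contra hne
  have hpos : 0 < ‖φ‖ := norm_pos_iff.mpr hne
  obtain ⟨j, hj⟩ : ∃ j, dist φ (e j) < ‖φ‖ / 4 :=
    (denseRange_denseSeq (StrongDual ℝ F)).exists_dist_lt φ (by positivity)
  rw [dist_eq_norm] at hj
  have hsmall : ‖e j‖ / 2 ≤ ‖φ - e j‖ := by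
    calc ‖e j‖ / 2 ≤ ‖e j (v j)‖ := hev j
      _ = ‖(φ - e j) (v j)‖ := by
        rw [sub_apply, hφ _ (Submodule.subset_span ⟨j, rfl⟩), zero_sub, norm_neg]
      _ ≤ ‖φ - e j‖ := (φ - e j).unit_le_opNorm _ (hv j)
  have hlarge : ‖φ‖ ≤ ‖φ - e j‖ + ‖e j‖ := by
    simpa only [sub_add_cancel] using norm_add_le (φ - e j) (e j)
  linarith

lemma exists_countable_dense_addSubgroup (F : Type*) [NormedAddCommGroup F] [SeparableSpace F] :
    ∃ D : AddSubgroup F, Countable D ∧ Dense (D : Set F) := by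
  let L : (ℕ →₀ ℤ) →+ F := (Finsupp.linearCombination ℤ (denseSeq F)).toAddMonoidHom
  refine ⟨L.range, (Set.countable_range L).to_subtype, (denseRange_denseSeq F).mono ?_⟩
  rintro _ ⟨n, rfl⟩
  exact ⟨Finsupp.single n 1, by simp [L]⟩

lemma norm_strongDual_le_iff_of_dense {D : Set F} (hD : Dense D) {e : StrongDual ℝ F} {C : ℝ}
    (hC : 0 ≤ C) : ‖e‖ ≤ C ↔ ∀ d ∈ D, ‖e d‖ ≤ C * ‖d‖ := by
  rw [e.opNorm_le_iff hC]
  refine ⟨fun h d _ => h d, fun h v => ?_⟩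
  have hclosed : IsClosed {v : F | ‖e v‖ ≤ C * ‖v‖} :=
    isClosed_le e.continuous.norm (continuous_const.mul continuous_norm)
  exact hclosed.closure_subset_iff.mpr h (hD v)

lemma exists_strongDual_extension {D : AddSubgroup F} (hD : Dense (D : Set F)) {C : ℝ}
    (hC : 0 ≤ C) {L : D → ℝ}
    (hadd : ∀ a b, L (a + b) = L a + L b) (hL : ∀ a, ‖L a‖ ≤ C * ‖(a : F)‖) :
    ∃ e : StrongDual ℝ F, (∀ d : D, e d = L d) ∧ ‖e‖ ≤ C := by
  let L₀ : D →+ ℝ := AddMonoidHom.mk' L hadd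
  let f : D →L[ℤ] ℝ := ⟨L₀.toIntLinearMap, AddMonoidHomClass.continuous_of_bound L₀ C hL⟩
  let i : D →L[ℤ] F := ⟨D.subtype.toIntLinearMap, continuous_subtype_val⟩
  have hi : DenseRange i := by
    rw [DenseRange, show Set.range i = (D : Set F) from Subtype.range_coe]
    exact hD
  let e : StrongDual ℝ F :=
    (f.extend i).toLinearMap.toAddMonoidHom.toRealLinearMap (f.extend i).continuous
  have he : ∀ d : D, e d = L d := f.extend_eq hi (isUniformInducing_val _)
  refine ⟨e, he, (norm_strongDual_le_iff_of_dense hD hC).mpr fun d hd => ?_⟩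
  rw [he ⟨d, hd⟩]
  exact hL ⟨d, hd⟩

end SeparableDual

section Measurability

open TopologicalSpace

variable {F Ω : Type*} [NormedAddCommGroup F] [NormedSpace ℝ F] [MeasurableSpace Ω]
  {D : Set F} {e : Ω → StrongDual ℝ F}

lemma measurable_norm_of_measurable_apply (hDc : D.Countable) (hD : Dense D)
    (he : ∀ d ∈ D, Measurable fun ω => e ω d) : Measurable fun ω => ‖e ω‖ := by
  refine measurable_of_Iic fun r => ?_
  rcases lt_or_ge r 0 with hr | hr
  · convert MeasurableSet.empty
    exact Set.eq_empty_of_forall_notMem fun ω hω => (hω.trans_lt hr).not_ge (norm_nonneg _)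
  · have hset : (fun ω => ‖e ω‖) ⁻¹' Set.Iic r = ⋂ d ∈ D, {ω | ‖e ω d‖ ≤ r * ‖d‖} := by
      ext ω
      simp only [Set.mem_preimage, Set.mem_Iic, Set.mem_iInter, Set.mem_ofPred_eq,
        norm_strongDual_le_iff_of_dense hD hr]
    rw [hset]
    exact .biInter hDc fun d hd => measurableSet_le (he d hd).norm measurable_const

lemma stronglyMeasurable_of_measurable_apply [SeparableSpace (StrongDual ℝ F)]
    (hDc : D.Countable) (hD : Dense D) (he : ∀ d ∈ D, Measurable fun ω => e ω d) :
    StronglyMeasurable e := by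
  borelize (StrongDual ℝ F)
  have : SecondCountableTopology (StrongDual ℝ F) := UniformSpace.secondCountable_of_separable _
  have hbasis : IsTopologicalBasis {s | ∃ (φ : StrongDual ℝ F) (r : ℝ), s = Metric.ball φ r} := by
    refine isTopologicalBasis_of_isOpen_of_nhds ?_ fun φ u hφ hu => ?_
    · rintro _ ⟨φ, r, rfl⟩
      exact Metric.isOpen_ball
    · obtain ⟨r, hr, hball⟩ := Metric.isOpen_iff.mp hu φ hφ
      exact ⟨_, ⟨φ, r, rfl⟩, Metric.mem_ball_self hr, hball⟩
  refine Measurable.stronglyMeasurable ?_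
  rw [BorelSpace.measurable_eq (α := StrongDual ℝ F), hbasis.borel_eq_generateFrom]
  refine measurable_generateFrom ?_
  rintro _ ⟨φ, r, rfl⟩
  have hdist : Measurable fun ω => ‖e ω - φ‖ :=
    measurable_norm_of_measurable_apply hDc hD fun d hd => (he d hd).sub_const (φ d)
  simp only [Metric.ball, dist_eq_norm]
  exact measurableSet_lt hdist measurable_const

end Measurability

section WeakLimit

variable {I Ω : Type*}

lemma exists_weak_limit_inner {X : Type*} [NormedAddCommGroup X] [InnerProductSpace ℝ X]
    [CompleteSpace X] (U : Ultrafilter I) {x : I → X} (hx : IsNormBdd x) :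
    ∃ z, ∀ y, Tendsto (fun i => inner ℝ (x i) y) U (𝓝 (inner ℝ z y)) := by
  obtain ⟨C, hC⟩ := hx
  let ξ : I → WeakDual ℝ X := fun i => (InnerProductSpace.toDual ℝ X (x i)).toWeakDual
  have hmem : ↑(U.map ξ) ≤ 𝓟 (WeakDual.toStrongDual ⁻¹' Metric.closedBall (0 : StrongDual ℝ X) C) :=
    le_principal_iff.mpr <| Filter.mem_map.mpr <| Eventually.of_forall fun i =>
      mem_closedBall_zero_iff.mpr <|
        ((InnerProductSpace.toDual ℝ X).norm_map (x i)).trans_le (hC i)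
  obtain ⟨ζ, -, hζ⟩ := (WeakDual.isCompact_closedBall 0 C).ultrafilter_le_nhds _ hmem
  refine ⟨(InnerProductSpace.toDual ℝ X).symm ζ.toStrongDual, fun y => ?_⟩
  rw [InnerProductSpace.toDual_symm_apply]
  exact ((WeakDual.eval_continuous y).tendsto ζ).comp hζ

variable [MeasurableSpace Ω] {P : Measure Ω}

lemma inner_memLp_toLp {φ ψ : Ω → ℝ} (hφ : MemLp φ 2 P) (hψ : MemLp ψ 2 P) :
    inner ℝ (hφ.toLp φ) (hψ.toLp ψ) = ∫ ω, ψ ω * φ ω ∂P := by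
  rw [L2.inner_def]
  refine integral_congr_ae ?_
  filter_upwards [hφ.coeFn_toLp, hψ.coeFn_toLp] with ω hφω hψω
  rw [hφω, hψω]
  rfl

lemma integral_indicator_one_mul {A : Set Ω} (hA : MeasurableSet A) (φ : Ω → ℝ) :
    ∫ ω, A.indicator 1 ω * φ ω ∂P = ∫ ω in A, φ ω ∂P := by
  simp only [← Set.indicator_mul_left, Pi.one_apply, one_mul, integral_indicator hA]

lemma ae_norm_le_of_forall_norm_setIntegral_le [IsFiniteMeasure P] {φ : Ω → ℝ}
    (hφ : Integrable φ P) {C : ℝ}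
    (h : ∀ A, MeasurableSet A → ‖∫ ω in A, φ ω ∂P‖ ≤ C * P.real A) : ∀ᵐ ω ∂P, ‖φ ω‖ ≤ C := by
  have hupper : ∀ᵐ ω ∂P, φ ω ≤ C := by
    refine ae_le_of_forall_setIntegral_le hφ (integrable_const C) fun A hA _ => ?_
    rw [setIntegral_const, smul_eq_mul, mul_comm]
    exact (abs_le.mp (h A hA)).2
  have hlower : ∀ᵐ ω ∂P, -C ≤ φ ω := by
    refine ae_le_of_forall_setIntegral_le (integrable_const (-C)) hφ fun A hA _ => ?_
    rw [setIntegral_const, smul_eq_mul, mul_neg, mul_comm]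
    exact (abs_le.mp (h A hA)).1
  filter_upwards [hupper, hlower] with ω hu hl using abs_le.mpr ⟨hl, hu⟩

lemma exists_weak_limit_of_bounded [IsFiniteMeasure P] (U : Ultrafilter I) {ψ : I → Ω → ℝ}
    (hm : ∀ i, Measurable (ψ i)) {C : ℝ} (hψ : ∀ i ω, ‖ψ i ω‖ ≤ C) :
    ∃ lam : Ω → ℝ, Measurable lam ∧ (∀ᵐ ω ∂P, ‖lam ω‖ ≤ C) ∧ ∀ h, MemLp h 2 P →
      Tendsto (fun i => ∫ ω, h ω * ψ i ω ∂P) U (𝓝 (∫ ω, h ω * lam ω ∂P)) := by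
  have hψL : ∀ i, MemLp (ψ i) 2 P := fun i =>
    .of_bound (hm i).aestronglyMeasurable C (.of_forall (hψ i))
  have hbdd : IsNormBdd fun i => (hψL i).toLp (ψ i) :=
    ⟨_, fun i => Lp.norm_le_of_ae_bound (abs_nonneg C) <| by
      filter_upwards [(hψL i).coeFn_toLp] with ω hω
      rw [hω]
      exact (hψ i ω).trans (le_abs_self C)⟩
  obtain ⟨z, hz⟩ := exists_weak_limit_inner U hbdd
  have hlim : ∀ h, MemLp h 2 P →
      Tendsto (fun i => ∫ ω, h ω * ψ i ω ∂P) U (𝓝 (∫ ω, h ω * z ω ∂P)) := fun h hh => by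
    have hzh : inner ℝ z (hh.toLp h) = ∫ ω, h ω * z ω ∂P := by
      rw [← inner_memLp_toLp (Lp.memLp z) hh, Lp.toLp_coeFn]
    simpa only [inner_memLp_toLp, hzh] using hz (hh.toLp h)
  refine ⟨z, (Lp.stronglyMeasurable z).measurable, ?_, hlim⟩
  refine ae_norm_le_of_forall_norm_setIntegral_le
    ((Lp.memLp z).integrable one_le_two) fun A hA => ?_
  have hA' := hlim (A.indicator 1) ((memLp_const 1).indicator hA)
  simp only [integral_indicator_one_mul hA] at hA'
  exact le_of_tendsto hA'.norm <| .of_forall fun i =>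
    norm_setIntegral_le_of_norm_le_const (measure_lt_top P A) fun ω _ => hψ i ω

end WeakLimit

section WeakStarLimit

open TopologicalSpace

variable {I Ω F : Type*} [NormedAddCommGroup F] [NormedSpace ℝ F] [MeasurableSpace Ω]
  {P : Measure Ω}

lemma exists_stronglyMeasurable_strongDual_ae_eq [SeparableSpace (StrongDual ℝ F)]
    {D : AddSubgroup F} [Countable D] (hD : Dense (D : Set F)) {C : ℝ} (hC : 0 ≤ C)
    {Λ : D → Ω → ℝ} (hΛ : ∀ d, Measurable (Λ d))
    (hadd : ∀ a b, ∀ᵐ ω ∂P, Λ (a + b) ω = Λ a ω + Λ b ω)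
    (hbdd : ∀ d, ∀ᵐ ω ∂P, ‖Λ d ω‖ ≤ C * ‖(d : F)‖) :
    ∃ e : Ω → StrongDual ℝ F, StronglyMeasurable e ∧ (∀ ω, ‖e ω‖ ≤ C) ∧
      ∀ d : D, (fun ω => e ω d) =ᵐ[P] Λ d := by
  have hgood : ∀ᵐ ω ∂P, (∀ a b, Λ (a + b) ω = Λ a ω + Λ b ω) ∧
      ∀ d : D, ‖Λ d ω‖ ≤ C * ‖(d : F)‖ :=
    (ae_all_iff.mpr fun a => ae_all_iff.mpr (hadd a)).and (ae_all_iff.mpr hbdd)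
  obtain ⟨A, hAsub, hA, hPA⟩ := exists_measurable_superset_of_null hgood
  have hext : ∀ ω, ∃ e : StrongDual ℝ F, (∀ d : D, e d = Aᶜ.indicator (Λ d) ω) ∧ ‖e‖ ≤ C := by
    intro ω
    by_cases hω : ω ∈ A
    · refine ⟨0, fun d => ?_, norm_zero.trans_le hC⟩
      rw [Set.indicator_of_notMem (Set.notMem_compl_iff.mpr hω), zero_apply]
    · have hgoodω := not_not.mp (mt (@hAsub ω) hω)
      simp only [Set.indicator_of_mem (Set.mem_compl hω)]
      exact exists_strongDual_extension hD hC hgoodω.1 hgoodω.2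
  choose e heq heC using hext
  refine ⟨e, ?_, heC, fun d => ?_⟩
  · refine stronglyMeasurable_of_measurable_apply (Set.to_countable (D : Set F)) hD fun d hd => ?_
    simp only [heq _ ⟨d, hd⟩]
    exact (hΛ ⟨d, hd⟩).indicator hA.compl
  · filter_upwards [measure_eq_zero_iff_ae_notMem.mp hPA] with ω hω
    rw [heq, Set.indicator_of_mem (Set.mem_compl hω)]

lemma ae_eq_add_of_weak_limit (U : Ultrafilter I) {φ : I → Ω → StrongDual ℝ F}
    (hφ : ∀ i v, Integrable (fun ω => φ i ω v) P) {v w : F} {α β γ : Ω → ℝ}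
    (hα : Integrable α P) (hβ : Integrable β P) (hγ : Integrable γ P)
    (hv : ∀ A, MeasurableSet A → Tendsto (fun i => ∫ ω in A, φ i ω v ∂P) U (𝓝 (∫ ω in A, α ω ∂P)))
    (hw : ∀ A, MeasurableSet A → Tendsto (fun i => ∫ ω in A, φ i ω w ∂P) U (𝓝 (∫ ω in A, β ω ∂P)))
    (hvw : ∀ A, MeasurableSet A →
      Tendsto (fun i => ∫ ω in A, φ i ω (v + w) ∂P) U (𝓝 (∫ ω in A, γ ω ∂P))) :
    ∀ᵐ ω ∂P, γ ω = α ω + β ω := by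
  refine Integrable.ae_eq_of_forall_setIntegral_eq _ _ hγ (hα.add hβ) fun A hA _ => ?_
  rw [integral_add hα.integrableOn hβ.integrableOn]
  refine tendsto_nhds_unique (hvw A hA) ?_
  refine ((hv A hA).add (hw A hA)).congr fun i => ?_
  simp only [map_add]
  exact (integral_add (hφ i v).integrableOn (hφ i w).integrableOn).symm

lemma lipschitzWith_integral_mul_apply {φ : Ω → StrongDual ℝ F}
    (hφ : ∀ v, Measurable fun ω => φ ω v) {C : ℝ≥0} (hC : ∀ ω, ‖φ ω‖ ≤ C) {h : Ω → ℝ}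
    (hh : Integrable h P) :
    LipschitzWith (C * ‖∫ ω, ‖h ω‖ ∂P‖₊) fun v => ∫ ω, h ω * φ ω v ∂P := by
  have hint : ∀ v, Integrable (fun ω => h ω * φ ω v) P := fun v =>
    hh.mul_bdd (hφ v).aestronglyMeasurable (.of_forall fun ω => (φ ω).le_of_opNorm_le (hC ω) v)
  refine LipschitzWith.of_dist_le_mul fun v w => ?_
  rw [dist_eq_norm, ← integral_sub (hint v) (hint w), NNReal.coe_mul, coe_nnnorm,
    Real.norm_of_nonneg (integral_nonneg fun ω => norm_nonneg (h ω)), mul_comm (C : ℝ), mul_assoc,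
    ← integral_mul_const]
  refine norm_integral_le_of_norm_le (hh.norm.mul_const _) (.of_forall fun ω => ?_)
  rw [← mul_sub, ← map_sub, norm_mul, dist_eq_norm]
  exact mul_le_mul_of_nonneg_left ((φ ω).le_of_opNorm_le (hC ω) _) (norm_nonneg _)

theorem exists_weakStar_limit [SeparableSpace (StrongDual ℝ F)] [IsFiniteMeasure P]
    (U : Ultrafilter I) {φ : I → Ω → StrongDual ℝ F} (hφ : ∀ i v, Measurable fun ω => φ i ω v)
    {C : ℝ≥0} (hC : ∀ i ω, ‖φ i ω‖ ≤ C) :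
    ∃ e : Ω → StrongDual ℝ F, Integrable e P ∧ ∀ h, MemLp h 2 P → ∀ v,
      Tendsto (fun i => ∫ ω, h ω * φ i ω v ∂P) U (𝓝 (∫ ω, h ω * e ω v ∂P)) := by
  have : SeparableSpace F := separableSpace_of_strongDual
  obtain ⟨D, _, hD⟩ := exists_countable_dense_addSubgroup F
  have hφv : ∀ i ω v, ‖φ i ω v‖ ≤ C * ‖v‖ := fun i ω => (φ i ω).le_of_opNorm_le (hC i ω)
  have hφint : ∀ i v, Integrable (fun ω => φ i ω v) P := fun i v =>
    .of_bound (hφ i v).aestronglyMeasurable _ (.of_forall fun ω => hφv i ω v)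
  choose Λ hΛ hΛC hΛlim using fun d : D =>
    exists_weak_limit_of_bounded (P := P) U (fun i => hφ i d) fun i ω => hφv i ω d
  have hΛint : ∀ d, Integrable (Λ d) P := fun d => .of_bound (hΛ d).aestronglyMeasurable _ (hΛC d)
  have hΛset : ∀ (d : D) A, MeasurableSet A →
      Tendsto (fun i => ∫ ω in A, φ i ω d ∂P) U (𝓝 (∫ ω in A, Λ d ω ∂P)) := fun d A hA => by
    have hlim := hΛlim d (A.indicator 1) ((memLp_const 1).indicator hA)
    simpa only [integral_indicator_one_mul hA] using hlim
  have hadd : ∀ a b, ∀ᵐ ω ∂P, Λ (a + b) ω = Λ a ω + Λ b ω := fun a b =>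
    ae_eq_add_of_weak_limit U hφint (hΛint a) (hΛint b) (hΛint (a + b)) (hΛset a) (hΛset b)
      (hΛset (a + b))
  obtain ⟨e, hem, heC, he⟩ := exists_stronglyMeasurable_strongDual_ae_eq hD C.2 hΛ hadd hΛC
  refine ⟨e, .of_bound hem.aestronglyMeasurable C (.of_forall heC), fun h hh v => ?_⟩
  have hhint : Integrable h P := hh.integrable one_le_two
  have hev : ∀ v, Measurable fun ω => e ω v := fun v =>
    ((ContinuousLinearMap.apply ℝ ℝ v).continuous.comp_stronglyMeasurable hem).measurable
  have hclosed : IsClosed {v : F |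
      Tendsto (fun i => ∫ ω, h ω * φ i ω v ∂P) U (𝓝 (∫ ω, h ω * e ω v ∂P))} :=
    Equicontinuous.isClosed_setOfPred_tendsto (LipschitzWith.uniformEquicontinuous _ _ fun i =>
      lipschitzWith_integral_mul_apply (hφ i) (hC i) hhint).equicontinuous
      (lipschitzWith_integral_mul_apply hev heC hhint).continuous
  refine hclosed.closure_subset_iff.mpr (fun d hd => ?_) (hD v)
  have hcongr : ∫ ω, h ω * e ω d ∂P = ∫ ω, h ω * Λ ⟨d, hd⟩ ω ∂P :=
    integral_congr_ae ((he ⟨d, hd⟩).mono fun ω hω => congrArg (h ω * ·) hω)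
  rw [Set.mem_ofPred_eq, hcongr]
  exact hΛlim ⟨d, hd⟩ h hh

end WeakStarLimit

section Mixing

variable {Ω E : Type*} [MeasurableSpace Ω] {P : Measure Ω} [NormedAddCommGroup E] [NormedSpace ℝ E]
  [CompleteSpace E]

theorem tendsto_integral_smul_of_tendsto_setIntegral {h : ℕ → Ω → ℝ}
    (hm : ∀ k, Measurable (h k)) {C : ℝ≥0} (hC : ∀ k ω, ‖h k ω‖ ≤ C)
    (hlim : ∀ A, MeasurableSet A → P A < ∞ → Tendsto (fun k => ∫ ω in A, h k ω ∂P) atTop (𝓝 0))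
    {e : Ω → E} (he : Integrable e P) :
    Tendsto (fun k => ∫ ω, h k ω • e ω ∂P) atTop (𝓝 0) := by
  have hint : ∀ k {e : Ω → E}, Integrable e P → Integrable (fun ω => h k ω • e ω) P :=
    fun k e he => he.bdd_smul C (hm k).aestronglyMeasurable (.of_forall (hC k))
  refine Integrable.induction (fun e => Tendsto (fun k => ∫ ω, h k ω • e ω ∂P) atTop (𝓝 0))
    (fun c A hA hPA => ?_) (fun f g _ hf hg hf0 hg0 => ?_) ?_ (fun f g hfg _ hf0 => ?_) he
  · simp only [← Set.indicator_smul_apply, integral_indicator hA, integral_smul_const]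
    simpa only [zero_smul] using (hlim A hA hPA).smul_const c
  · simp only [Pi.add_apply, smul_add, fun k => integral_add (hint k hf) (hint k hg)]
    simpa only [add_zero] using hf0.add hg0
  · refine Equicontinuous.isClosed_setOfPred_tendsto (LipschitzWith.uniformEquicontinuous _ C
      fun k => LipschitzWith.of_dist_le_mul fun f g => ?_).equicontinuous continuous_const
    rw [dist_eq_norm, ← integral_sub (hint k (L1.integrable_coeFn f))
      (hint k (L1.integrable_coeFn g)), L1.dist_eq_integral_dist, ← integral_const_mul]
    simp only [← smul_sub, dist_eq_norm]
    refine norm_integral_le_of_norm_le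
      (((L1.integrable_coeFn f).sub (L1.integrable_coeFn g)).norm.const_mul _)
      (.of_forall fun ω => ?_)
    rw [norm_smul]
    exact mul_le_mul_of_nonneg_right (hC k ω) (norm_nonneg _)
  · refine hf0.congr fun k => integral_congr_ae ?_
    exact hfg.mono fun ω hω => congrArg (h k ω • ·) hω

theorem tendsto_zero_of_weakStar_limit {I F : Type*} [NormedAddCommGroup F] [NormedSpace ℝ F]
    [TopologicalSpace.SeparableSpace (StrongDual ℝ F)] [IsFiniteMeasure P] (U : Ultrafilter I)
    {φ : I → Ω → StrongDual ℝ F} (hφ : ∀ i v, Measurable fun ω => φ i ω v)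
    {C : ℝ≥0} (hC : ∀ i ω, ‖φ i ω‖ ≤ C) {h : ℕ → Ω → ℝ} (hm : ∀ k, Measurable (h k)) {C' : ℝ≥0}
    (hC' : ∀ k ω, ‖h k ω‖ ≤ C')
    (hlim : ∀ A, MeasurableSet A → Tendsto (fun k => ∫ ω in A, h k ω ∂P) atTop (𝓝 0))
    {T : ℕ → StrongDual ℝ F}
    (hT : ∀ k v, Tendsto (fun i => ∫ ω, h k ω * φ i ω v ∂P) U (𝓝 (T k v))) :
    Tendsto T atTop (𝓝 0) := by
  obtain ⟨e, he, helim⟩ := exists_weakStar_limit (P := P) U hφ hC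
  have hTe : T = fun k => ∫ ω, h k ω • e ω ∂P := by
    funext k
    ext v
    have hint : Integrable (fun ω => h k ω • e ω) P :=
      he.bdd_smul C' (hm k).aestronglyMeasurable (.of_forall (hC' k))
    rw [ContinuousLinearMap.integral_apply hint]
    have hL2 : MemLp (h k) 2 P :=
      .of_bound (hm k).aestronglyMeasurable C' (.of_forall (hC' k))
    exact tendsto_nhds_unique (hT k v) (helim (h k) hL2 v)
  rw [hTe]
  exact tendsto_integral_smul_of_tendsto_setIntegral hm hC' (fun A hA _ => hlim A hA) he

end Mixing

section Orthogonality

lemma tendsto_inner_zero_of_pairwise_orthogonal {X : Type*} [NormedAddCommGroup X]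
    [InnerProductSpace ℝ X] [CompleteSpace X] {x : ℕ → X} (hx : IsNormBdd x)
    (horth : Pairwise fun k l => inner ℝ (x k) (x l) = 0) (y : X) :
    Tendsto (fun k => inner ℝ (x k) y) atTop (𝓝 0) := by
  refine (tendsto_iff_ultrafilter _ _ _).mpr fun U hU => ?_
  obtain ⟨z, hz⟩ := exists_weak_limit_inner U hx
  have hzx (l : ℕ) : inner ℝ z (x l) = 0 :=
    tendsto_nhds_unique (hz (x l)) <| tendsto_const_nhds.congr' <|
      hU ((eventually_ne_atTop l).mono fun _ hk => (horth hk).symm)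
  have hzz : z = 0 := by
    refine inner_self_eq_zero.mp (tendsto_nhds_unique (hz z) ?_)
    simp only [real_inner_comm, hzx, tendsto_const_nhds]
  simpa only [hzz, inner_zero_left] using hz y

theorem tendsto_setIntegral_zero_of_pairwise_orthogonal {Ω : Type*} [MeasurableSpace Ω]
    {P : Measure Ω} [IsFiniteMeasure P] {h : ℕ → Ω → ℝ} (hm : ∀ k, Measurable (h k)) {C : ℝ≥0}
    (hC : ∀ k ω, ‖h k ω‖ ≤ C) (horth : Pairwise fun k l => ∫ ω, h k ω * h l ω ∂P = 0)
    {A : Set Ω} (hA : MeasurableSet A) :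
    Tendsto (fun k => ∫ ω in A, h k ω ∂P) atTop (𝓝 0) := by
  have hL (k : ℕ) : MemLp (h k) 2 P :=
    .of_bound (hm k).aestronglyMeasurable C (.of_forall (hC k))
  have hAL : MemLp (A.indicator (1 : Ω → ℝ)) 2 P := (memLp_const 1).indicator hA
  have hbdd : IsNormBdd fun k => (hL k).toLp (h k) :=
    ⟨_, fun k => Lp.norm_le_of_ae_bound C.coe_nonneg <| by
      filter_upwards [(hL k).coeFn_toLp] with ω hω
      rw [hω]
      exact hC k ω⟩
  have horthL : Pairwise fun k l => inner ℝ ((hL k).toLp (h k)) ((hL l).toLp (h l)) = 0 :=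
    fun k l hkl => (inner_memLp_toLp _ _).trans (horth hkl.symm)
  simpa only [inner_memLp_toLp, integral_indicator_one_mul hA] using
    tendsto_inner_zero_of_pairwise_orthogonal hbdd horthL (hAL.toLp _)

end Orthogonality

/-! ### Resampling one coordinate of a product measure -/

section Resampling

variable {Y : Type*} [MeasurableSpace Y] {ν : Measure Y} [IsProbabilityMeasure ν] {T : Y → Y}
  {R : Set Y} {κ : ℝ≥0}

lemma infinitePi_pi_inter_eval_preimage (hR : MeasurableSet R) (k : ℕ) (s : Finset ℕ)
    {t : ℕ → Set Y} (ht : ∀ i, MeasurableSet (t i)) :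
    Measure.infinitePi (fun _ : ℕ => ν) (Set.pi s t ∩ {ω | ω k ∈ R}) =
      ν ((if k ∈ s then t k else Set.univ) ∩ R) * ∏ i ∈ s.erase k, ν (t i) := by
  let t' : ℕ → Set Y := Function.update t k ((if k ∈ s then t k else Set.univ) ∩ R)
  have hself : t' k = (if k ∈ s then t k else Set.univ) ∩ R := Function.update_self ..
  have hne {i : ℕ} (hi : i ≠ k) : t' i = t i := Function.update_of_ne hi ..
  have ht' (i : ℕ) : MeasurableSet (t' i) := by
    rcases eq_or_ne i k with rfl | hi
    · rw [hself]
      split_ifs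
      exacts [(ht i).inter hR, MeasurableSet.univ.inter hR]
    · exact hne hi ▸ ht i
  have hbox : Set.pi s t ∩ {ω | ω k ∈ R} = Set.pi ↑(insert k (s.erase k)) t' := by
    ext ω
    simp only [Set.mem_inter_iff, Set.mem_pi, Set.mem_ofPred_eq, t', Function.update_apply]
    grind
  rw [hbox, Measure.infinitePi_pi _ fun i _ => ht' i,
    Finset.prod_insert (Finset.notMem_erase k s), hself]
  exact congrArg _ (Finset.prod_congr rfl fun i hi => by rw [hne (Finset.ne_of_mem_erase hi)])

theorem infinitePi_map_update (hT : Measurable T) (hR : MeasurableSet R)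
    (h : ν.map T = κ • ν.restrict R) (k : ℕ) :
    (Measure.infinitePi fun _ : ℕ => ν).map (fun ω => Function.update ω k (T (ω k))) =
      κ • (Measure.infinitePi fun _ : ℕ => ν).restrict {ω | ω k ∈ R} := by
  let f (i : ℕ) : Y → Y := if i = k then T else id
  have hf (i : ℕ) : Measurable (f i) := by
    simp only [f]
    split_ifs
    exacts [hT, measurable_id]
  have hupdate : (fun ω : ℕ → Y => Function.update ω k (T (ω k))) = fun ω i => f i (ω i) := by
    funext ω i
    rcases eq_or_ne i k with rfl | hi
    · simp only [Function.update_self, f, if_true]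
    · simp only [Function.update_of_ne hi, f, if_neg hi, id]
  have hprob (i : ℕ) : IsProbabilityMeasure (ν.map (f i)) :=
    Measure.isProbabilityMeasure_map (hf i).aemeasurable
  rw [hupdate, Measure.infinitePi_map_pi _ hf]
  refine (Measure.eq_infinitePi _ fun s t ht => ?_).symm
  have hmass {B : Set Y} (hB : MeasurableSet B) : κ * ν (B ∩ R) = ν.map T B := by
    rw [h, Measure.smul_apply, Measure.restrict_apply hB, ENNReal.smul_def, smul_eq_mul]
  have hmap_of_ne {i : ℕ} (hi : i ≠ k) : ν.map (f i) (t i) = ν (t i) := by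
    simp only [f, if_neg hi, Measure.map_id]
  rw [Measure.smul_apply, Measure.restrict_apply (.pi s.countable_toSet fun i _ => ht i),
    infinitePi_pi_inter_eval_preimage hR k s ht, ENNReal.smul_def, smul_eq_mul, ← mul_assoc]
  have hprod : ∏ i ∈ s.erase k, ν (t i) = ∏ i ∈ s.erase k, ν.map (f i) (t i) :=
    Finset.prod_congr rfl fun i hi => (hmap_of_ne (Finset.ne_of_mem_erase hi)).symm
  rw [hprod]
  by_cases hk : k ∈ s
  · rw [if_pos hk, hmass (ht k), ← Finset.mul_prod_erase s _ hk]
    simp only [f, if_true]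
  · rw [if_neg hk, hmass .univ, Measure.map_apply hT .univ, Set.preimage_univ, measure_univ,
      one_mul, Finset.erase_eq_of_notMem hk]

/-- The signed density `κ · 1_R(ω k) - 1`, which measures the effect on the product measure of
applying `T` to the `k`-th coordinate when `ν.map T = κ • ν.restrict R`. -/
noncomputable def resamplingDensity (κ : ℝ≥0) (R : Set Y) (k : ℕ) (ω : ℕ → Y) : ℝ :=
  κ * R.indicator 1 (ω k) - 1

lemma measurable_resamplingDensity (κ : ℝ≥0) (hR : MeasurableSet R) (k : ℕ) :
    Measurable (resamplingDensity κ R k) :=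
  (((measurable_one.indicator hR).comp (measurable_pi_apply k)).const_mul _).sub_const 1

lemma norm_resamplingDensity_le {Y : Type*} (κ : ℝ≥0) (R : Set Y) (k : ℕ) (ω : ℕ → Y) :
    ‖resamplingDensity κ R k ω‖ ≤ (κ + 1 : ℝ≥0) := by
  push_cast
  refine norm_sub_le_of_le ?_ norm_one.le
  rw [norm_mul, NNReal.norm_eq]
  refine mul_le_of_le_one_right κ.coe_nonneg ((norm_indicator_le_norm_self _ _).trans ?_)
  exact norm_one.le

theorem integral_update_sub_integral (hT : Measurable T) (hR : MeasurableSet R)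
    (h : ν.map T = κ • ν.restrict R) (k : ℕ) {φ : (ℕ → Y) → ℝ} (hm : Measurable φ)
    (hφ : IsNormBdd φ) :
    ∫ ω, φ (Function.update ω k (T (ω k))) ∂(Measure.infinitePi fun _ => ν) -
        ∫ ω, φ ω ∂(Measure.infinitePi fun _ => ν) =
      ∫ ω, resamplingDensity κ R k ω * φ ω ∂(Measure.infinitePi fun _ => ν) := by
  obtain ⟨C, hC⟩ := hφ
  have hint : Integrable φ (Measure.infinitePi fun _ : ℕ => ν) :=
    .of_bound hm.aestronglyMeasurable C (.of_forall hC)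
  have hRk : MeasurableSet {ω : ℕ → Y | ω k ∈ R} := measurable_pi_apply k hR
  have hupdate : Measurable fun ω : ℕ → Y => Function.update ω k (T (ω k)) :=
    measurable_update'.comp (measurable_id.prodMk (hT.comp (measurable_pi_apply k)))
  have hdensity (ω : ℕ → Y) : resamplingDensity κ R k ω * φ ω =
      κ * {ω : ℕ → Y | ω k ∈ R}.indicator φ ω - φ ω := by
    by_cases hω : ω k ∈ R <;> simp [resamplingDensity, hω, sub_mul]
  simp only [hdensity]
  rw [integral_sub ((hint.indicator hRk).const_mul _) hint, integral_const_mul,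
    integral_indicator hRk, ← integral_map hupdate.aemeasurable hm.aestronglyMeasurable,
    infinitePi_map_update hT hR h, integral_smul_nnreal_measure, NNReal.smul_def, smul_eq_mul]

theorem tendsto_setIntegral_resamplingDensity (hT : Measurable T) (hR : MeasurableSet R)
    (h : ν.map T = κ • ν.restrict R) {A : Set (ℕ → Y)} (hA : MeasurableSet A) :
    Tendsto (fun k => ∫ ω in A, resamplingDensity κ R k ω ∂(Measure.infinitePi fun _ => ν))
      atTop (𝓝 0) := by
  refine tendsto_setIntegral_zero_of_pairwise_orthogonal
    (measurable_resamplingDensity κ hR) (norm_resamplingDensity_le κ R) (fun k l hkl => ?_) hA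
  refine (integral_update_sub_integral hT hR h k (measurable_resamplingDensity κ hR l)
    ⟨_, norm_resamplingDensity_le κ R l⟩).symm.trans ?_
  simp only [resamplingDensity, Function.update_of_ne hkl.symm, sub_self]

theorem tendsto_zero_of_tendsto_integral_update_sub {I F : Type*} [NormedAddCommGroup F]
    [NormedSpace ℝ F] [TopologicalSpace.SeparableSpace (StrongDual ℝ F)] (hT : Measurable T)
    (hR : MeasurableSet R) (h : ν.map T = κ • ν.restrict R) (U : Ultrafilter I)
    {φ : I → (ℕ → Y) → StrongDual ℝ F} (hm : ∀ i v, Measurable fun ω => φ i ω v) {C : ℝ≥0}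
    (hC : ∀ i ω, ‖φ i ω‖ ≤ C) {e : ℕ → StrongDual ℝ F}
    (he : ∀ k v, Tendsto
      (fun i => ∫ ω, φ i (Function.update ω k (T (ω k))) v ∂(Measure.infinitePi fun _ => ν) -
        ∫ ω, φ i ω v ∂(Measure.infinitePi fun _ => ν)) U (𝓝 (e k v))) :
    Tendsto e atTop (𝓝 0) := by
  refine tendsto_zero_of_weakStar_limit U hm hC (measurable_resamplingDensity κ hR)
    (norm_resamplingDensity_le κ R)
    (fun A hA => tendsto_setIntegral_resamplingDensity hT hR h hA) fun k v => ?_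
  exact (he k v).congr fun i => integral_update_sub_integral hT hR h k (hm i v)
    (IsNormBdd.dual_apply ⟨C, hC i⟩ v)

end Resampling

section RandomWord

variable {A : Type*} [Fintype A] [Nonempty A]

lemma tsum_inv_two_mul_card_pow_length :
    ∑' w : FreeMonoid A, ((2 * Fintype.card A : ℝ≥0∞)⁻¹) ^ w.length = 2 := by
  have hcard : (Fintype.card A : ℝ≥0∞) ≠ 0 := Nat.cast_ne_zero.mpr Fintype.card_ne_zero
  have hlength (n : ℕ) : ∑' w : {w : FreeMonoid A // w.length = n},
      ((2 * Fintype.card A : ℝ≥0∞)⁻¹) ^ (w : FreeMonoid A).length = 2⁻¹ ^ n := by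
    let _ : Fintype {w : FreeMonoid A // w.length = n} :=
      inferInstanceAs (Fintype (List.Vector A n))
    have hvector : Fintype.card {w : FreeMonoid A // w.length = n} = Fintype.card A ^ n :=
      card_vector n
    rw [tsum_fintype, Finset.sum_congr rfl fun w _ => by rw [w.2], Finset.sum_const,
      nsmul_eq_mul, Finset.card_univ, hvector, Nat.cast_pow, ← mul_pow,
      ENNReal.mul_inv (.inl two_ne_zero) (.inl ENNReal.ofNat_ne_top), mul_left_comm,
      ENNReal.mul_inv_cancel hcard (ENNReal.natCast_ne_top _), mul_one]
  rw [← (Equiv.sigmaFiberEquiv (FreeMonoid.length (α := A))).tsum_eq, ENNReal.tsum_sigma']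
  simp only [Equiv.sigmaFiberEquiv_apply, hlength, ENNReal.tsum_geometric,
    ENNReal.one_sub_inv_two, inv_inv]

variable (A) in
/-- A random word whose length is geometric of parameter `1/2` and whose letters are uniform. -/
noncomputable def randomWord : PMF (FreeMonoid A) :=
  PMF.normalize (fun w => ((2 * Fintype.card A : ℝ≥0∞)⁻¹) ^ w.length)
    (by rw [tsum_inv_two_mul_card_pow_length]; exact two_ne_zero)
    (by rw [tsum_inv_two_mul_card_pow_length]; exact ENNReal.ofNat_ne_top)

lemma randomWord_eq_mul_randomWord_of_mul (a : A) (w : FreeMonoid A) :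
    randomWord A w = (2 * Fintype.card A : ℝ≥0) * randomWord A (FreeMonoid.of a * w) := by
  have hcard : (2 * Fintype.card A : ℝ≥0∞) ≠ 0 := by simp
  have htop : (2 * Fintype.card A : ℝ≥0∞) ≠ ∞ := by finiteness
  simp only [randomWord, PMF.normalize_apply, FreeMonoid.length_mul, FreeMonoid.length_of]
  push_cast
  rw [add_comm, pow_succ', ← mul_assoc, ← mul_assoc,
    ENNReal.mul_inv_cancel hcard htop, one_mul]

variable [MeasurableSpace (FreeMonoid A)] [DiscreteMeasurableSpace (FreeMonoid A)]

theorem randomWord_map_of_mul (a : A) :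
    (randomWord A).toMeasure.map (FreeMonoid.of a * ·) =
      (2 * Fintype.card A : ℝ≥0) •
        (randomWord A).toMeasure.restrict (Set.range (FreeMonoid.of a * ·)) := by
  have : Countable (FreeMonoid A) := inferInstanceAs (Countable (List A))
  refine Measure.ext_of_singleton fun w => ?_
  rw [Measure.map_apply .of_discrete (.singleton w), Measure.smul_apply,
    Measure.restrict_apply (.singleton w), ENNReal.smul_def, smul_eq_mul]
  by_cases hw : w ∈ Set.range (FreeMonoid.of a * ·)
  · obtain ⟨w, rfl⟩ := hw
    rw [Set.inter_eq_left.mpr (Set.singleton_subset_iff.mpr (Set.mem_range_self w)),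
      PMF.toMeasure_apply_singleton _ _ (.singleton _),
      ← randomWord_eq_mul_randomWord_of_mul, ← Set.image_singleton,
      Set.preimage_image_eq _ (mul_right_injective _),
      PMF.toMeasure_apply_singleton _ _ (.singleton _)]
  · rw [Set.singleton_inter_eq_empty.mpr hw, Set.preimage_singleton_eq_empty.mpr hw, measure_empty,
      mul_zero]

end RandomWord

/-- The mean `φ ↦ ∫ φ dμ` of a probability measure on a discrete space. -/
noncomputable def Mean.ofMeasure {I : Type*} [MeasurableSpace I] [DiscreteMeasurableSpace I]
    (μ : Measure I) [IsProbabilityMeasure μ] : Mean I :=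
  have integrable {φ : I → ℝ} (h : IsNormBdd φ) : Integrable φ μ :=
    h.elim fun C hC => .of_bound Measurable.of_discrete.aestronglyMeasurable C (.of_forall hC)
  { toFun := fun φ => ∫ i, φ i ∂μ
    map_add' := fun _ _ hφ hψ => integral_add (integrable hφ) (integrable hψ)
    map_smul' := fun c φ _ => integral_const_mul c φ
    norm_le' := fun C φ h => by
      simpa only [probReal_univ, mul_one] using
        norm_integral_le_of_norm_le_const (μ := μ) (.of_forall h)
    map_const' := fun c => by
      simp only [integral_const, probReal_univ, one_smul] }

/-! ### Random products of commuting words -/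

section RandomProduct

variable {Γ A : Type*} [Monoid Γ] {b : ℕ → A → Γ}

lemma commute_freeMonoid_lift {B : Type*} {f : A → Γ} {g : B → Γ}
    (h : ∀ a b, Commute (f a) (g b)) (x : FreeMonoid A) (y : FreeMonoid B) :
    Commute (FreeMonoid.lift f x) (FreeMonoid.lift g y) := by
  induction x using FreeMonoid.inductionOn with
  | one => simp only [map_one, Commute.one_left]
  | mul x x' hx hx' => rw [map_mul]; exact hx.mul_left hx'
  | of a =>
    induction y using FreeMonoid.inductionOn with
    | one => simp only [map_one, Commute.one_right]
    | mul y y' hy hy' => rw [map_mul]; exact hy.mul_right hy'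
    | of b => simpa only [FreeMonoid.lift_eval_of] using h a b

lemma pairwise_commute_freeMonoid_lift (hb : Pairwise fun k l => ∀ a a', Commute (b k a) (b l a'))
    (m : ℕ) : Pairwise fun i j : Fin m =>
      ∀ x y, Commute (FreeMonoid.lift (b i) x) (FreeMonoid.lift (b j) y) :=
  fun _ _ hij => commute_freeMonoid_lift (hb (Fin.val_injective.ne hij))

/-- The product of the first `m` words of a sequence, where the letters of the `k`-th word are
evaluated through `b k`. -/
noncomputable def evalProduct (hb : Pairwise fun k l => ∀ a a', Commute (b k a) (b l a')) (m : ℕ)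
    (ω : ℕ → FreeMonoid A) : Γ :=
  MonoidHom.noncommPiCoprod (fun j : Fin m => FreeMonoid.lift (b j))
    (pairwise_commute_freeMonoid_lift hb m) fun j => ω j

variable (hb : Pairwise fun k l => ∀ a a', Commute (b k a) (b l a'))

lemma evalProduct_update {k m : ℕ} (hkm : k < m) (a : A) (ω : ℕ → FreeMonoid A) :
    evalProduct hb m (Function.update ω k (FreeMonoid.of a * ω k)) =
      b k a * evalProduct hb m ω := by
  have hupdate : (fun j : Fin m => Function.update ω k (FreeMonoid.of a * ω k) j) =
      Pi.mulSingle (⟨k, hkm⟩ : Fin m) (FreeMonoid.of a) * fun j : Fin m => ω j := by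
    funext j
    rw [Pi.mul_apply]
    rcases eq_or_ne j ⟨k, hkm⟩ with rfl | hj
    · simp only [Function.update_self, Pi.mulSingle_eq_same]
    · rw [Function.update_of_ne (by simpa only [ne_eq, Fin.ext_iff] using hj),
        Pi.mulSingle_eq_of_ne hj, one_mul]
  rw [evalProduct, hupdate, map_mul, MonoidHom.noncommPiCoprod_mulSingle, FreeMonoid.lift_eval_of]
  rfl

variable [Finite A] [MeasurableSpace (FreeMonoid A)] [DiscreteMeasurableSpace (FreeMonoid A)]
  [MeasurableSpace Γ]

lemma measurable_evalProduct (m : ℕ) : Measurable (evalProduct hb m) := by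
  have : Countable (FreeMonoid A) := inferInstanceAs (Countable (List A))
  exact Measurable.of_discrete.comp
    (measurable_pi_lambda _ fun j : Fin m => measurable_pi_apply (j : ℕ))

end RandomProduct

theorem exists_asymptotically_invariant_mean {Γ A F : Type*} [Monoid Γ] [Finite A] [Nonempty A]
    [NormedAddCommGroup F] [NormedSpace ℝ F] [TopologicalSpace.SeparableSpace (StrongDual ℝ F)]
    {b : ℕ → A → Γ} (hb : Pairwise fun k l => ∀ a a', Commute (b k a) (b l a')) :
    ∃ M : Mean Γ, ∀ f : Γ → StrongDual ℝ F, IsNormBdd f → ∀ a, Tendsto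
      (fun k => M.weakIntegral (fun x => f (b k a * x)) - M.weakIntegral f) atTop (𝓝 0) := by
  have := Fintype.ofFinite A
  let _ : MeasurableSpace (FreeMonoid A) := ⊤
  have : DiscreteMeasurableSpace (FreeMonoid A) := ⟨fun _ => trivial⟩
  let _ : MeasurableSpace Γ := ⊤
  have : DiscreteMeasurableSpace Γ := ⟨fun _ => trivial⟩
  let P : Measure (ℕ → FreeMonoid A) := Measure.infinitePi fun _ => (randomWord A).toMeasure
  have hX := measurable_evalProduct hb
  have hprob (m : ℕ) : IsProbabilityMeasure (P.map (evalProduct hb m)) :=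
    Measure.isProbabilityMeasure_map (hX m).aemeasurable
  let law (m : ℕ) : Mean Γ := Mean.ofMeasure (P.map (evalProduct hb m))
  have hlaw (m : ℕ) (φ : Γ → ℝ) : law m φ = ∫ ω, φ (evalProduct hb m ω) ∂P :=
    integral_map (hX m).aemeasurable Measurable.of_discrete.aestronglyMeasurable
  refine ⟨Mean.lim (hyperfilter ℕ) law, fun f hf a => ?_⟩
  have hfb (k : ℕ) : IsNormBdd fun x => f (b k a * x) := hf.comp _
  have hφ : IsNormBdd fun p : ℕ × (ℕ → FreeMonoid A) => f (evalProduct hb p.1 p.2) := hf.comp _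
  obtain ⟨C, hC⟩ := hφ
  refine tendsto_zero_of_tendsto_integral_update_sub (T := (FreeMonoid.of a * ·)) .of_discrete
    .of_discrete (randomWord_map_of_mul a) (hyperfilter ℕ)
    (fun m v => (Measurable.of_discrete (f := fun x => f x v)).comp (hX m)) (C := C.toNNReal)
    (fun m ω => (hC (m, ω)).trans (Real.le_coe_toNNReal C)) fun k v => ?_
  rw [sub_apply, Mean.weakIntegral_apply _ (hfb k), Mean.weakIntegral_apply _ hf]
  refine ((Mean.tendsto_lim _ law ((hfb k).dual_apply v)).sub
    (Mean.tendsto_lim _ law (hf.dual_apply v))).congr' ?_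
  refine Nat.hyperfilter_le_atTop ((eventually_gt_atTop k).mono fun m hkm => ?_)
  simp only [hlaw, evalProduct_update hb hkm, P]

/-! ### Commuting conjugates -/

section CommutingConjugates

variable {G : Type*} [Group G]

/-- `D` has commuting conjugates if each of its finite subsets has infinitely many `G`-conjugates
that commute with one another elementwise. -/
def HasCommutingConjugates (D : Subgroup G) : Prop :=
  ∀ S : Finset G, (S : Set G) ⊆ D → ∃ s : ℕ → G, Pairwise fun k l => ∀ a ∈ S, ∀ b ∈ S,
    Commute (s k * a * (s k)⁻¹) (s l * b * (s l)⁻¹)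

theorem hasCommutingConjugates_of_commute_zpow_conj {D G₀ : Subgroup G}
    (hconj : ∀ S : Finset G, (S : Set G) ⊆ D → ∃ t : G, ∀ x ∈ S, t⁻¹ * x * t ∈ G₀) {g : G}
    (hcomm : ∀ p q : ℤ, p ≠ q → ∀ a ∈ G₀, ∀ b ∈ G₀,
      Commute (g ^ p * a * g ^ (-p)) (g ^ q * b * g ^ (-q))) :
    HasCommutingConjugates D := fun S hS => by
  obtain ⟨t, ht⟩ := hconj S hS
  refine ⟨fun k => g ^ (k : ℤ) * t⁻¹, fun k l hkl a ha b hb => ?_⟩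
  simpa only [mul_inv_rev, inv_inv, mul_assoc, zpow_neg] using
    hcomm k l (Nat.cast_injective.ne hkl) _ (ht a ha) _ (ht b hb)

end CommutingConjugates

section InvariantMean

variable {G ι F : Type*} [Group G] [NormedAddCommGroup F] [NormedSpace ℝ F]

/-- The mean `M` is invariant under left translation by the elements of `T`, when tested against
the bounded functions to the dual of `F` that are equivariant for the diagonal action of `G`. -/
def Mean.IsInvariantOnEquivariant (M : Mean (ι → G)) (ρ : G →* (F ≃ₗᵢ[ℝ] F))
    (T : Set (ι → G)) : Prop :=
  ∀ f : (ι → G) → StrongDual ℝ F, IsNormBdd f →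
    (∀ g y, f (fun i => g * y i) = contragredientHom ρ g (f y)) →
    ∀ γ ∈ T, M.weakIntegral (fun y => f (γ * y)) = M.weakIntegral f

variable [Finite ι] [TopologicalSpace.SeparableSpace (StrongDual ℝ F)] {D : Subgroup G}

/-- Conjugating back by `s k` turns asymptotic invariance under the `k`-th conjugate of `S` into
invariance under `S` itself, because the action on the dual is isometric. -/
lemma HasCommutingConjugates.exists_mean_invariant_of_finset (hD : HasCommutingConjugates D)
    (ρ : G →* (F ≃ₗᵢ[ℝ] F)) {S : Finset G} (hS : (S : Set G) ⊆ D) :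
    ∃ M : Mean (ι → G), M.IsInvariantOnEquivariant ρ (Set.univ.pi fun _ => S) := by
  classical
  obtain ⟨s, hs⟩ := hD (insert 1 S) <| by
    simpa only [Finset.coe_insert, Set.insert_subset_iff] using ⟨D.one_mem, hS⟩
  have : Nonempty (ι → ↥(insert 1 S)) := ⟨fun _ => ⟨1, Finset.mem_insert_self 1 S⟩⟩
  let b (k : ℕ) (α : ι → ↥(insert 1 S)) : ι → G := fun i => s k * α i * (s k)⁻¹
  have hb : Pairwise fun k l => ∀ α α', Commute (b k α) (b l α') :=
    fun k l hkl α α' => funext fun i => hs hkl _ (α i).2 _ (α' i).2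
  obtain ⟨M, hM⟩ := exists_asymptotically_invariant_mean (F := F) hb
  let N (k : ℕ) : Mean (ι → G) := M.map fun y i => (s k)⁻¹ * y i
  refine ⟨Mean.lim (hyperfilter ℕ) N, fun f hf hfG γ hγ => ?_⟩
  let α (i : ι) : ↥(insert 1 S) := ⟨γ i, Finset.mem_insert_of_mem (hγ i trivial)⟩
  have hγf : IsNormBdd fun y => f (γ * y) := hf.comp _
  have hγs (k : ℕ) (y : ι → G) :
      f (γ * fun i => (s k)⁻¹ * y i) = contragredientHom ρ (s k)⁻¹ (f (b k α * y)) := by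
    rw [← hfG]
    congr 1
    funext i
    simp [b, α, mul_assoc]
  have hdiff (k : ℕ) (v : F) : N k (fun y => f (γ * y) v) - N k (fun y => f y v) =
      (M.weakIntegral (fun y => f (b k α * y)) - M.weakIntegral f) (ρ (s k) v) := by
    rw [sub_apply, M.weakIntegral_apply (hf.comp _), M.weakIntegral_apply hf]
    simp only [N, Mean.map, hγs, hfG, contragredientHom_apply, inv_inv]
  ext v
  rw [Mean.weakIntegral_apply _ hγf, Mean.weakIntegral_apply _ hf]
  refine Mean.lim_eq_lim_of_tendsto_sub _ N (hγf.dual_apply v) (hf.dual_apply v) ?_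
  have hnorm := ((hM f hf α).norm.mul_const ‖v‖).mono_left Nat.hyperfilter_le_atTop
  rw [norm_zero, zero_mul] at hnorm
  refine squeeze_zero_norm (fun k => ?_) hnorm
  rw [hdiff, ← (ρ (s k)).norm_map v]
  exact ContinuousLinearMap.le_opNorm _ _

lemma HasCommutingConjugates.exists_invariant_mean (hD : HasCommutingConjugates D)
    (ρ : G →* (F ≃ₗᵢ[ℝ] F)) :
    ∃ M : Mean (ι → G), M.IsInvariantOnEquivariant ρ (Set.univ.pi fun _ => D) := by
  classical
  choose N hN using fun S : Finset D =>
    hD.exists_mean_invariant_of_finset (ι := ι) ρ (S := S.map (.subtype _))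
      (by rw [Finset.coe_map]; exact Set.image_subset_iff.mpr fun d _ => d.2)
  refine ⟨Mean.lim (Ultrafilter.of atTop) N, fun f hf hfG γ hγ => ?_⟩
  have hγf : IsNormBdd fun y => f (γ * y) := hf.comp _
  ext v
  rw [Mean.weakIntegral_apply _ hγf, Mean.weakIntegral_apply _ hf]
  refine Mean.lim_eq_lim_of_eventuallyEq _ N ?_
  have := Fintype.ofFinite ι
  let γD (i : ι) : D := ⟨γ i, hγ i trivial⟩
  refine Ultrafilter.of_le _ ((eventually_ge_atTop (Finset.univ.image γD)).mono fun S hS => ?_)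
  have hγS : γ ∈ Set.univ.pi fun _ : ι => (S.map (.subtype _) : Set G) := fun i _ =>
    Finset.mem_map_of_mem _ (hS (Finset.mem_image_of_mem γD (Finset.mem_univ i)))
  have h := DFunLike.congr_fun (hN S f hf hfG γ hγS) v
  rwa [(N S).weakIntegral_apply hf, (N S).weakIntegral_apply hγf] at h

theorem HasCommutingConjugates.exists_symmetric_invariant_mean (hD : HasCommutingConjugates D)
    (ρ : G →* (F ≃ₗᵢ[ℝ] F)) :
    ∃ M : Mean (ι → G),
      (∀ (σ : Equiv.Perm ι) (φ : (ι → G) → ℝ), M (fun y => φ (y ∘ σ)) = M φ) ∧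
        M.IsInvariantOnEquivariant ρ (Set.univ.pi fun _ => D) := by
  classical
  have := Fintype.ofFinite ι
  obtain ⟨M, hM⟩ := hD.exists_invariant_mean (ι := ι) ρ
  refine ⟨(Mean.uniform (Equiv.Perm ι)).bind fun σ => M.map (· ∘ σ), fun σ φ => ?_,
    fun f hf hfG γ hγ => ?_⟩
  · exact Mean.uniform_comp_equiv (Equiv.mulRight σ) fun τ => M fun y => φ (y ∘ τ)
  · ext v
    rw [Mean.weakIntegral_apply _ hf, Mean.weakIntegral_apply _ (hf.comp _)]
    refine congrArg (Mean.uniform (Equiv.Perm ι)) (funext fun σ => ?_)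
    have hγσ (y : ι → G) : γ * y ∘ σ = ((γ ∘ σ.symm) * y) ∘ σ := by
      funext i
      simp only [Pi.mul_apply, Function.comp_apply, Equiv.symm_apply_apply]
    have hfσ : IsNormBdd fun y => f (y ∘ σ) := hf.comp _
    have h := DFunLike.congr_fun (hM (fun y => f (y ∘ σ)) hfσ (fun g y => hfG g (y ∘ σ))
      (γ ∘ σ.symm) fun i _ => hγ _ trivial) v
    rw [M.weakIntegral_apply hfσ, M.weakIntegral_apply (hfσ.comp _)] at h
    simpa only [Mean.map, hγσ] using h

end InvariantMean

theorem vanishing_of_selfSimilar_derived_general {G F : Type*} [Group G] [NormedAddCommGroup F]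
    [NormedSpace ℝ F] [TopologicalSpace.SeparableSpace (StrongDual ℝ F)] {D : Subgroup G}
    (hD : IsCoamenable D) (hD' : HasCommutingConjugates D) (ρ : G →* (F ≃ₗᵢ[ℝ] F)) :
    HbVanish (contragredient ρ) := by
  refine hbVanish_of_homogeneous (π := contragredientHom ρ) fun n f hfbdd hδf hf => ?_
  obtain ⟨M, hperm, hM⟩ := hD'.exists_symmetric_invariant_mean (ι := Fin (n + 2)) ρ
  have hfG (g : G) (y : Fin (n + 2) → G) : f (List.ofFn fun i => g * y i) =
      contragredientHom ρ g (f (List.ofFn y)) := by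
    rw [← hf g trivial, List.map_ofFn]
    rfl
  obtain ⟨B, hBbdd, hBequiv, hB⟩ := exists_equivariant_primitive_of_mean hfbdd hδf
    (hf.mono le_top) M (fun σ φ _ => hperm σ φ) fun γ =>
      hM (f <| List.ofFn ·) (hfbdd.comp _) hfG (fun i => γ i) fun i _ => (γ i).2
  exact hD.exists_equivariant_primitive hf hBbdd hBequiv hB

/-- Let `G₀ ≤ G` be a subgroup such that every finite subset of the
`k`-th derived subgroup `G^(k)` is contained in some `G`-conjugate of `G₀`, and such
that `G` contains an element `g` whose conjugates of `G₀` by distinct powers commute.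
Then `Hb^n(G,E) = 0` for all `n ≥ 1` and all separable dual Banach `G`-modules
`E = F*`. -/
theorem vanishing_of_selfSimilar_derived.{u}
    {G : Type*} [Group G] (k : ℕ) (G₀ : Subgroup G)
    (hconj : ∀ S : Finset G, (↑S : Set G) ⊆ (derivedSeries G k : Set G) →
      ∃ t : G, ∀ x ∈ S, t⁻¹ * x * t ∈ G₀)
    (g : G)
    (hcomm : ∀ p q : ℤ, p ≠ q → ∀ a ∈ G₀, ∀ b ∈ G₀,
      (g ^ p * a * g ^ (-p)) * (g ^ q * b * g ^ (-q)) =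
      (g ^ q * b * g ^ (-q)) * (g ^ p * a * g ^ (-p)))
    (F : Type u) [NormedAddCommGroup F] [NormedSpace ℝ F] [CompleteSpace F]
    (ρ : G →* (F ≃ₗᵢ[ℝ] F))
    (hsep : TopologicalSpace.SeparableSpace (F →L[ℝ] ℝ)) :
    HbVanish (contragredient ρ) :=
  vanishing_of_selfSimilar_derived_general (isCoamenable_derivedSeries G k)
    (hasCommutingConjugates_of_commute_zpow_conj hconj hcomm) ρ
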